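/- arXiv:2504.14198 — 2 statements merged into one kernel-verified Lean document; each statement's English description precedes it below -/
import Mathlib

section
/- Let F be a field with char(F) ≠ 2, let n ≥ 2, and let T : M_n(F) → M_n(F) be a bijective linear map. Then T(C_n) ⊆ C_n if and only if there exist invertible matrices P, Q ∈ M_n(F) with PQ ∈ Λ_n(F) such that either T(X) = P·X·Q for all X ∈ M_n(F), or T(X) = P·Xᵗ·Q for all X ∈ M_n(F). -/
/-!
Call a matrix good if it is an involution times a unipotent matrix. When `2 ≠ 0`, a unipotent
matrix is a product of two involutions, since its Cayley transform is nilpotent and hence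
anticommutes with some involution; so good matrices lie in `C_n`. Let `T⋆` be the adjoint of `T`
for the trace form. If a good `A` were trace-orthogonal to the `n`-dimensional space
`T⋆ (v ⊗ Fⁿ)`, then `T A` would be an invertible matrix killing `v`. For `n ≥ 3` good matrices are
plentiful enough that the only `n`-dimensional spaces of operators with no trace-orthogonal good
matrix are the spaces of rank one operators with a common range or a common kernel. Hence `T⋆` maps
each `v ⊗ Fⁿ` to some `x ⊗ Fⁿ` or `Fⁿ ⊗ x`, and by linearity `T⋆`, and therefore `T`, is
`X ↦ P X Q` or `X ↦ P Xᵀ Q`.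

For `n = 2` the set `C_2` is given by `det A = ±1`. Any singular `N` lies on a line `J + t N` of
constant determinant one, along which `(det (T J + t T N))² = 1`; so `T` preserves singularity (over
the field with three elements because `C_2` is then `GL_2`), and the same analysis of spaces of rank
one operators applies directly to `T`.
-/

open Matrix

/-- The set of matrices that are products of three involutions. -/
def ProdInv3 (F : Type*) [Field F] (n : ℕ) : Set (Matrix (Fin n) (Fin n) F) :=
  {A | ∃ J₁ J₂ J₃ : Matrix (Fin n) (Fin n) F,
    J₁ * J₁ = 1 ∧ J₂ * J₂ = 1 ∧ J₃ * J₃ = 1 ∧ A = J₁ * J₂ * J₃}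

/-- `Λ_n(F)`: matrices whose left multiplication preserves products of three involutions. -/
def LambdaSet (F : Type*) [Field F] (n : ℕ) : Set (Matrix (Fin n) (Fin n) F) :=
  {P | ∀ A ∈ ProdInv3 F n, P * A ∈ ProdInv3 F n}

section OddGrading

theorem exists_le_disjoint_le_sup {α : Type*} [Lattice α] [IsModularLattice α] [BoundedOrder α]
    [ComplementedLattice α] {a b c : α} (hab : Disjoint a b) (hac : a ≤ c) :
    ∃ d, a ≤ d ∧ d ≤ c ∧ Disjoint d b ∧ c ≤ d ⊔ b := by
  obtain ⟨u, hu, hsup⟩ := IsModularLattice.exists_disjoint_and_sup_eq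
    (sup_le hac (inf_le_right : b ⊓ c ≤ c))
  have hdc : u ⊔ a ≤ c := sup_le (le_sup_right.trans hsup.le) hac
  refine ⟨u ⊔ a, le_sup_right, hdc, ?_, ?_⟩
  · have hdisj : Disjoint (u ⊔ a) (b ⊓ c) :=
      (hab.mono_right inf_le_left).disjoint_sup_left_of_disjoint_sup_right hu.symm
    exact disjoint_iff_inf_le.2 ((le_inf inf_le_left (inf_comm b c ▸
      le_inf (inf_le_left.trans hdc) inf_le_right)).trans hdisj.le_bot)
  · calc c = u ⊔ a ⊔ b ⊓ c := by rw [sup_assoc, sup_comm, hsup]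
      _ ≤ u ⊔ a ⊔ b := sup_le_sup_left inf_le_left _

variable {R V : Type*} [Ring R] [AddCommGroup V] [Module R V]

/-- `P ⊕ Q = W` is a `ℤ/2`-grading of the submodule `W` for which `f` is odd. -/
structure IsOddGrading (f : Module.End R V) (W P Q : Submodule R V) : Prop where
  disjoint : Disjoint P Q
  sup_eq : P ⊔ Q = W
  left_le : P ≤ Q.comap f
  right_le : Q ≤ P.comap f

theorem IsOddGrading.exists_of_map [IsSemisimpleModule R V] {f : Module.End R V}
    {W P Q : Submodule R V} (h : IsOddGrading f (W.map f) P Q) (hW : W.map f ≤ W) :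
    ∃ P' Q', IsOddGrading f W P' Q' := by
  have hsup : W ≤ (W ⊓ Q.comap f) ⊔ (W ⊓ P.comap f) := by
    intro w hw
    have hfw : f w ∈ P ⊔ Q := h.sup_eq ▸ Submodule.mem_map_of_mem hw
    obtain ⟨p, hp, q, hq, hpq⟩ := Submodule.mem_sup.1 hfw
    obtain ⟨a, ha, rfl⟩ : p ∈ W.map f := h.sup_eq ▸ Submodule.mem_sup_left hp
    refine Submodule.mem_sup.2 ⟨w - a, ⟨W.sub_mem hw ha, ?_⟩, a, ⟨ha, hp⟩, sub_add_cancel w a⟩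
    change f (w - a) ∈ Q
    rwa [map_sub, ← hpq, add_sub_cancel_left]
  have hP : P ≤ W := le_sup_left.trans (h.sup_eq.trans_le hW)
  have hQ : Q ≤ W := le_sup_right.trans (h.sup_eq.trans_le hW)
  obtain ⟨P', hPP', hP', hdisj, hP'sup⟩ :=
    exists_le_disjoint_le_sup h.disjoint (le_inf hP h.left_le)
  obtain ⟨Q', hQQ', hQ', hdisj', hQ'sup⟩ :=
    exists_le_disjoint_le_sup hdisj.symm (le_inf hQ h.right_le)
  refine ⟨P', Q', hdisj'.symm, le_antisymm ?_ (hsup.trans (sup_le ?_ ?_)), ?_, ?_⟩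
  · exact sup_le (hP'.trans inf_le_left) (hQ'.trans inf_le_left)
  · exact hP'sup.trans (sup_le_sup_left hQQ' P')
  · exact hQ'sup.trans (sup_comm Q' P').le
  · exact hP'.trans (inf_le_right.trans (Submodule.comap_mono hQQ'))
  · exact hQ'.trans (inf_le_right.trans (Submodule.comap_mono hPP'))

theorem IsOddGrading.exists_of_isNilpotent [IsSemisimpleModule R V] {f : Module.End R V}
    (hf : IsNilpotent f) : ∃ P Q, IsOddGrading f ⊤ P Q := by
  obtain ⟨k, hk⟩ := hf
  have hrange (j : ℕ) : (LinearMap.range (f ^ j)).map f = LinearMap.range (f ^ (j + 1)) := by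
    rw [pow_succ', Module.End.mul_eq_comp, LinearMap.range_comp]
  suffices ∀ j ≤ k, ∃ P Q, IsOddGrading f (LinearMap.range (f ^ j)) P Q by
    simpa [Module.End.one_eq_id] using this 0 k.zero_le
  intro j hj
  induction hj using Nat.decreasingInduction with
  | self =>
    rw [hk, LinearMap.range_zero]
    exact ⟨⊥, ⊥, disjoint_bot_left, sup_idem _, bot_le, bot_le⟩
  | of_succ j _ ih =>
    obtain ⟨P, Q, h⟩ := ih
    rw [← hrange] at h
    refine h.exists_of_map ?_
    rw [hrange, pow_succ, Module.End.mul_eq_comp]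
    exact LinearMap.range_comp_le_range _ _

theorem IsOddGrading.exists_involution {f : Module.End R V} {P Q : Submodule R V}
    (h : IsOddGrading f ⊤ P Q) : ∃ J : Module.End R V, J * J = 1 ∧ J * f = -(f * J) := by
  have hPQ : IsCompl P Q := ⟨h.disjoint, codisjoint_iff.2 h.sup_eq⟩
  set π := P.projection Q hPQ
  have hπ : π * π = π := Submodule.isIdempotentElem_projection hPQ
  have hfπ : π * f = f - f * π := by
    ext v
    have hPv : π (f (π v)) = 0 := (Submodule.projection_apply_eq_zero_iff hPQ).2
      (h.left_le (Submodule.projection_apply_mem hPQ v))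
    have hQv : π (f (v - π v)) = f (v - π v) := Submodule.projection_apply_of_mem_left hPQ
      (h.right_le (Submodule.sub_projection_mem hPQ v))
    simpa [hPv] using hQv
  refine ⟨π + π - 1, ?_, ?_⟩
  · have : (π + π - 1) * (π + π - 1) = 4 * (π * π - π) + 1 := by noncomm_ring
    rw [this, hπ, sub_self, mul_zero, zero_add]
  · have : (π + π - 1) * f + f * (π + π - 1) = 2 * (π * f - (f - f * π)) := by noncomm_ring
    rwa [hfπ, sub_self, mul_zero, ← eq_neg_iff_add_eq_zero] at this

theorem exists_involution_anticommute_of_isNilpotent [IsSemisimpleModule R V]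
    {f : Module.End R V} (hf : IsNilpotent f) :
    ∃ J : Module.End R V, J * J = 1 ∧ J * f = -(f * J) :=
  let ⟨_, _, h⟩ := IsOddGrading.exists_of_isNilpotent hf
  h.exists_involution

-- `M` is the Cayley transform `(U - 1) / (U + 1)`.
theorem exists_isNilpotent_mul_one_sub_eq_one_add {A : Type*} [Ring A] (h2 : IsUnit (2 : A))
    {U : A} (hU : IsNilpotent (U - 1)) : ∃ M, IsNilpotent M ∧ U * (1 - M) = 1 + M := by
  obtain ⟨u, hu⟩ : IsUnit (U - 1 + 2) :=
    hU.isUnit_add_right_of_commute h2 (Commute.ofNat_right _ 2)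
  have hcomm : Commute (U - 1) (↑u⁻¹ : A) := Commute.units_inv_right (by
    rw [hu]; exact (Commute.refl _).add_right (Commute.ofNat_right _ 2))
  refine ⟨(U - 1) * ↑u⁻¹, hcomm.isNilpotent_mul_right hU, ?_⟩
  refine u.isUnit.mul_left_injective ?_
  calc U * (1 - (U - 1) * ↑u⁻¹) * u = U * (u - (U - 1) * (↑u⁻¹ * u)) := by noncomm_ring
    _ = u + (U - 1) * (↑u⁻¹ * u) := by
      rw [u.inv_mul, hu, ← one_add_one_eq_two]; noncomm_ring
    _ = (1 + (U - 1) * ↑u⁻¹) * u := by noncomm_ring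

theorem exists_two_involutions_of_isNilpotent_sub_one [IsSemisimpleModule R V]
    (h2 : IsUnit (2 : Module.End R V)) {U : Module.End R V} (hU : IsNilpotent (U - 1)) :
    ∃ J K : Module.End R V, J * J = 1 ∧ K * K = 1 ∧ U = J * K := by
  obtain ⟨M, hM, hUM⟩ := exists_isNilpotent_mul_one_sub_eq_one_add h2 hU
  obtain ⟨J, hJ, hJM⟩ := exists_involution_anticommute_of_isNilpotent hM
  refine ⟨J, J * U, hJ, hM.isUnit_one_sub.mul_left_injective ?_, by rw [← mul_assoc, hJ, one_mul]⟩
  have hJ_add : J * (1 + M) = (1 - M) * J := by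
    rw [mul_add, hJM]; noncomm_ring
  calc J * U * (J * U) * (1 - M) = J * U * (J * (U * (1 - M))) := by simp only [mul_assoc]
    _ = J * U * ((1 - M) * J) := by rw [hUM, hJ_add]
    _ = J * (U * (1 - M)) * J := by simp only [mul_assoc]
    _ = 1 * (1 - M) := by rw [hUM, hJ_add, mul_assoc, hJ, mul_one, one_mul]

end OddGrading

/-- `a` is the product of an involution and a unipotent element. Once `2` is invertible such
endomorphisms are products of three involutions, and unlike the latter they are stable under
bordering. -/
def IsInvolutionMulUnipotent {A : Type*} [Ring A] (a : A) : Prop :=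
  ∃ j : A, j * j = 1 ∧ IsNilpotent (j * a - 1)

theorem isInvolutionMulUnipotent_one {A : Type*} [Ring A] :
    IsInvolutionMulUnipotent (1 : A) :=
  ⟨1, one_mul 1, by rw [one_mul, sub_self]; exact IsNilpotent.zero⟩

theorem IsInvolutionMulUnipotent.exists_three_involutions {R V : Type*} [Ring R] [AddCommGroup V]
    [Module R V] [IsSemisimpleModule R V] (h2 : IsUnit (2 : Module.End R V)) {f : Module.End R V}
    (hf : IsInvolutionMulUnipotent f) :
    ∃ J₁ J₂ J₃ : Module.End R V, J₁ * J₁ = 1 ∧ J₂ * J₂ = 1 ∧ J₃ * J₃ = 1 ∧ f = J₁ * J₂ * J₃ := by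
  obtain ⟨J, hJ, hJf⟩ := hf
  obtain ⟨K, L, hK, hL, hKL⟩ := exists_two_involutions_of_isNilpotent_sub_one h2 hJf
  exact ⟨J, K, L, hJ, hK, hL, by rw [mul_assoc, ← hKL, ← mul_assoc, hJ, one_mul]⟩

/-- Vectors `x`, `y` and functionals `ξ`, `η` dual to them; they split off the plane spanned by
`x` and `y` from the ambient module. -/
structure DualPair (R V : Type*) [CommRing R] [AddCommGroup V] [Module R V] where
  x : V
  y : V
  ξ : V →ₗ[R] R
  η : V →ₗ[R] R
  ξ_x : ξ x = 1
  ξ_y : ξ y = 0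
  η_x : η x = 0
  η_y : η y = 1

namespace DualPair

section CommRing

variable {R V : Type*} [CommRing R] [AddCommGroup V] [Module R V] (D : DualPair R V)

/-- The complement of the plane spanned by `x` and `y` on which both functionals vanish. -/
def compl : Submodule R V := LinearMap.ker D.ξ ⊓ LinearMap.ker D.η

/-- The projection onto `D.compl` along the plane spanned by `x` and `y`. -/
def proj : V →ₗ[R] D.compl :=
  (LinearMap.id - D.ξ.smulRight D.x - D.η.smulRight D.y).codRestrict D.compl fun v => by
    simp [compl, D.ξ_x, D.ξ_y, D.η_x, D.η_y]

theorem coe_proj (v : V) : (D.proj v : V) = v - D.ξ v • D.x - D.η v • D.y := rfl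

theorem ξ_coe (m : D.compl) : D.ξ m = 0 := m.2.1

theorem η_coe (m : D.compl) : D.η m = 0 := m.2.2

theorem proj_coe (m : D.compl) : D.proj m = m := by
  ext
  simp [coe_proj, ξ_coe, η_coe]

theorem proj_x : D.proj D.x = 0 := by
  ext
  simp [coe_proj, D.ξ_x, D.η_x]

theorem proj_y : D.proj D.y = 0 := by
  ext
  simp [coe_proj, D.ξ_y, D.η_y]

/-- The compression of an endomorphism to `D.compl`. -/
def compress : Module.End R V →ₗ[R] Module.End R D.compl :=
  LinearMap.lcomp R D.compl D.compl.subtype ∘ₗ LinearMap.compRight R D.proj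

theorem compress_apply (f : Module.End R V) (m : D.compl) : D.compress f m = D.proj (f m) := rfl

/-- The endomorphism of the ambient module bordering `K` by a row `φ` (with values along `y`) and
a column `z`. -/
def border (K : Module.End R D.compl) (φ : V →ₗ[R] R) (z : V) : Module.End R V :=
  D.compl.subtype ∘ₗ K ∘ₗ D.proj + φ.smulRight D.y + D.η.smulRight z

theorem border_apply (K : Module.End R D.compl) (φ : V →ₗ[R] R) (z v : V) :
    D.border K φ z v = K (D.proj v) + φ v • D.y + D.η v • z := rfl

/-- The endomorphism acting as `J` on `D.compl` and exchanging `x` and `y`. -/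
def swap (J : Module.End R D.compl) : Module.End R V :=
  D.compl.subtype ∘ₗ J ∘ₗ D.proj + D.ξ.smulRight D.y + D.η.smulRight D.x

theorem swap_apply (J : Module.End R D.compl) (v : V) :
    D.swap J v = J (D.proj v) + D.ξ v • D.y + D.η v • D.x := rfl

theorem swap_mul_swap {J : Module.End R D.compl} (hJ : J * J = 1) : D.swap J * D.swap J = 1 := by
  ext v
  have hJv : J (J (D.proj v)) = D.proj v := LinearMap.congr_fun hJ _
  have hproj : D.proj (D.swap J v) = J (D.proj v) := by
    simp [swap_apply, proj_coe, proj_x, proj_y]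
  have hξ : D.ξ (D.swap J v) = D.η v := by simp [swap_apply, ξ_coe, D.ξ_x, D.ξ_y]
  have hη : D.η (D.swap J v) = D.ξ v := by simp [swap_apply, η_coe, D.η_x, D.η_y]
  rw [Module.End.mul_apply, swap_apply, hproj, hξ, hη, hJv, coe_proj, Module.End.one_apply]
  module

theorem isInvolutionMulUnipotent_border {K : Module.End R D.compl}
    (hK : IsInvolutionMulUnipotent K) {φ : V →ₗ[R] R} {z : V} (hz : D.ξ z = 1)
    (hφ : φ D.x = 1) : IsInvolutionMulUnipotent (D.border K φ z) := by
  obtain ⟨J, hJ, k, hk⟩ := hK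
  refine ⟨D.swap J, D.swap_mul_swap hJ, k + 2, ?_⟩
  set N := D.swap J * D.border K φ z - 1 with hN
  have hηN (v : V) : D.η (N v) = 0 := by
    simp [hN, swap_apply, border_apply, η_coe, ξ_coe, hz, D.η_x, D.η_y, D.ξ_y]
  have hpN (v : V) (hv : D.η v = 0) : D.proj (N v) = (J * K - 1) (D.proj v) := by
    simp [hN, swap_apply, border_apply, proj_coe, proj_x, proj_y, hv]
  have hNx : N D.x = 0 := by
    simp [hN, swap_apply, border_apply, proj_x, proj_y, D.η_x, D.ξ_y, D.η_y, hφ]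
  have hpow (v : V) (j : ℕ) :
      D.η ((N ^ (j + 1)) v) = 0 ∧ D.proj ((N ^ (j + 1)) v) = ((J * K - 1) ^ j) (D.proj (N v)) := by
    induction j with
    | zero => simp [hηN]
    | succ j ih =>
      rw [pow_succ', pow_succ' (J * K - 1), Module.End.mul_apply, Module.End.mul_apply, ← ih.2]
      exact ⟨hηN _, hpN _ ih.1⟩
  ext v
  obtain ⟨hη, hp⟩ := hpow v k
  have hx : (N ^ (k + 1)) v = D.ξ ((N ^ (k + 1)) v) • D.x := by
    have := D.coe_proj ((N ^ (k + 1)) v)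
    rwa [hp, hk, hη, zero_smul, sub_zero, LinearMap.zero_apply, ZeroMemClass.coe_zero,
      eq_comm, sub_eq_zero] at this
  rw [pow_succ', Module.End.mul_apply, hx, map_smul, hNx, smul_zero, LinearMap.zero_apply]

end CommRing

variable {F V : Type*} [Field F] [AddCommGroup V] [Module F V] [FiniteDimensional F V]
  (D : DualPair F V)

theorem finrank_compl_add_two : Module.finrank F D.compl + 2 = Module.finrank F V := by
  have hsurj : Function.Surjective (D.ξ.prod D.η) := fun ⟨a, b⟩ =>
    ⟨a • D.x + b • D.y, by simp [D.ξ_x, D.ξ_y, D.η_x, D.η_y]⟩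
  rw [compl, ← LinearMap.ker_prod, ← (D.ξ.prod D.η).finrank_range_add_finrank_ker,
    LinearMap.range_eq_top.2 hsurj, finrank_top, Module.finrank_prod, Module.finrank_self, add_comm]

theorem trace_border_mul (K : Module.End F D.compl) (φ : V →ₗ[F] F) (z : V)
    (l : Module.End F V) : LinearMap.trace F V (D.border K φ z * l) =
      LinearMap.trace F D.compl (K * D.compress l) + φ (l D.y) + D.η (l z) := by
  have hK : LinearMap.trace F V (D.compl.subtype ∘ₗ K ∘ₗ D.proj ∘ₗ l) =
      LinearMap.trace F D.compl (K * D.compress l) :=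
    LinearMap.trace_comp_comm' (K ∘ₗ D.proj ∘ₗ l) D.compl.subtype
  have hsplit : D.border K φ z * l = D.compl.subtype ∘ₗ K ∘ₗ D.proj ∘ₗ l +
      (φ ∘ₗ l).smulRight D.y + (D.η ∘ₗ l).smulRight z := rfl
  rw [hsplit, map_add, map_add, hK, LinearMap.trace_smulRight, LinearMap.trace_smulRight]
  rfl

end DualPair

section Dual

variable {F E V : Type*} [Field F] [AddCommGroup E] [Module F E] [AddCommGroup V] [Module F V]

theorem exists_dual_apply_eq {S : Submodule F E} (e : E →ₗ[F] V) (r : E →ₗ[F] F) {x : V}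
    (h : ∀ l ∈ S, ∀ c : F, e l = c • x → r l = c) :
    ∃ φ : Module.Dual F V, (∀ l ∈ S, φ (e l) = r l) ∧ φ x = 1 := by
  set e' : S × F →ₗ[F] V := (e ∘ₗ S.subtype).coprod (LinearMap.toSpanSingleton F V x)
  set r' : Module.Dual F (S × F) := (r ∘ₗ S.subtype).coprod LinearMap.id
  have hr' : r' ∈ LinearMap.range e'.dualMap := by
    rw [LinearMap.range_dualMap_eq_dualAnnihilator_ker, Submodule.mem_dualAnnihilator]
    rintro ⟨l, c⟩ hl
    have hlc : e l = -c • x := by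
      rw [neg_smul]
      exact eq_neg_of_add_eq_zero_left hl
    simp [r', h l l.2 _ hlc]
  obtain ⟨φ, hφ⟩ := hr'
  refine ⟨φ, fun l hl => ?_, ?_⟩
  · simpa [e', r'] using LinearMap.congr_fun hφ (⟨l, hl⟩, 0)
  · simpa [e', r'] using LinearMap.congr_fun hφ (0, 1)

theorem exists_vector_apply_eq [FiniteDimensional F V] {S : Submodule F E}
    (e : E →ₗ[F] Module.Dual F V) (r : E →ₗ[F] F) {ξ : Module.Dual F V}
    (h : ∀ l ∈ S, ∀ c : F, e l = c • ξ → r l = c) :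
    ∃ z : V, (∀ l ∈ S, e l z = r l) ∧ ξ z = 1 := by
  obtain ⟨φ, hφ, hφξ⟩ := exists_dual_apply_eq e r h
  obtain ⟨z, rfl⟩ := (Module.evalEquiv F V).surjective φ
  exact ⟨z, hφ, hφξ⟩

theorem exists_mem_notMem_notMem {S P Q : Submodule F V} (hP : ¬ S ≤ P) (hQ : ¬ S ≤ Q) :
    ∃ s ∈ S, s ∉ P ∧ s ∉ Q := by
  have h : ¬ (S : Set V) ⊆ P ∪ Q := fun h => (AddSubgroupClass.subset_union.1 h).elim hP hQ
  simpa [Set.not_subset] using h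

theorem exists_dual_eq_one_eq_zero_notMem {x y : V} {S : Submodule F (Module.Dual F V)}
    (hx : x ∉ F ∙ y) (hS : ¬ (F ∙ y).dualAnnihilator ≤ S) :
    ∃ ξ : Module.Dual F V, ξ x = 1 ∧ ξ y = 0 ∧ ξ ∉ S := by
  have hxy : ¬ (F ∙ y).dualAnnihilator ≤ (F ∙ x).dualAnnihilator := by
    rwa [Subspace.dualAnnihilator_le_dualAnnihilator_iff, Submodule.span_singleton_le_iff_mem]
  obtain ⟨ξ, hξy, hξx, hξS⟩ := exists_mem_notMem_notMem hxy hS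
  replace hξy : ξ y = 0 :=
    (Submodule.mem_dualAnnihilator ξ).1 hξy y (Submodule.mem_span_singleton_self y)
  replace hξx : ξ x ≠ 0 := fun h => hξx <| (Submodule.mem_dualAnnihilator ξ).2 fun v hv => by
    obtain ⟨c, rfl⟩ := Submodule.mem_span_singleton.1 hv
    rw [map_smul, h, smul_zero]
  refine ⟨(ξ x)⁻¹ • ξ, ?_, ?_, ?_⟩
  · simp [hξx]
  · simp [hξy]
  · rwa [S.smul_mem_iff (inv_ne_zero hξx)]

theorem notMem_span_singleton_comm {v w : V} (hv : v ≠ 0) (h : w ∉ F ∙ v) : v ∉ F ∙ w := by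
  rintro hvw
  obtain ⟨c, rfl⟩ := Submodule.mem_span_singleton.1 hvw
  exact h (Submodule.mem_span_singleton.2 ⟨c⁻¹, inv_smul_smul₀ (left_ne_zero_of_smul hv) w⟩)

theorem exists_dual_eq_zero_eq_one_ne_zero {x y w : V} (hy : y ∉ F ∙ x) (hw : w ∉ F ∙ x) :
    ∃ η : Module.Dual F V, η x = 0 ∧ η y = 1 ∧ η w ≠ 0 := by
  obtain ⟨η, hηy, hηx, hηw⟩ := exists_dual_eq_one_eq_zero_notMem (S := (F ∙ w).dualAnnihilator) hy
    (by rwa [Subspace.dualAnnihilator_le_dualAnnihilator_iff, Submodule.span_singleton_le_iff_mem])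
  refine ⟨η, hηx, hηy, fun h => hηw ((Submodule.mem_dualAnnihilator η).2 fun v hv => ?_)⟩
  obtain ⟨c, rfl⟩ := Submodule.mem_span_singleton.1 hv
  rw [map_smul, h, smul_zero]

theorem DualPair.exists_ξ_notMem [FiniteDimensional F V] {x y : V} {η : Module.Dual F V}
    (hx : x ≠ 0) (hηx : η x = 0) (hηy : η y = 1) {S : Submodule F (Module.Dual F V)}
    (hS : Module.finrank F S + 1 < Module.finrank F V) :
    ∃ D : DualPair F V, D.x = x ∧ D.y = y ∧ D.η = η ∧ D.ξ ∉ S := by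
  have hxy : x ∉ F ∙ y := by
    rintro hxy
    obtain ⟨c, rfl⟩ := Submodule.mem_span_singleton.1 hxy
    rw [map_smul, hηy, smul_eq_mul, mul_one] at hηx
    exact hx (by rw [hηx, zero_smul])
  obtain ⟨ξ, hξx, hξy, hξS⟩ := exists_dual_eq_one_eq_zero_notMem (S := S) hxy (fun h => by
    have h1 := Submodule.finrank_mono h
    have h2 := Subspace.finrank_add_finrank_dualAnnihilator_eq (F ∙ y)
    have h3 := finrank_span_le_card (R := F) ({y} : Set V)
    rw [Set.toFinset_singleton, Finset.card_singleton] at h3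
    omega)
  exact ⟨⟨x, y, ξ, η, hξx, hξy, hηx, hηy⟩, rfl, rfl, rfl, hξS⟩

end Dual

section TraceOrthogonal

variable {F V : Type*} [Field F] [AddCommGroup V] [Module F V]

/-- Some product of an involution and a unipotent endomorphism is orthogonal to `L` for the trace
form. -/
def HasTraceOrthogonal (L : Submodule F (Module.End F V)) : Prop :=
  ∃ A : Module.End F V, IsInvolutionMulUnipotent A ∧ ∀ l ∈ L, LinearMap.trace F V (A * l) = 0

theorem hasTraceOrthogonal_bot : HasTraceOrthogonal (⊥ : Submodule F (Module.End F V)) :=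
  ⟨1, isInvolutionMulUnipotent_one, by simp⟩

variable {L : Submodule F (Module.End F V)}

/-- The subspace of the values at `v` of the endomorphisms in `L`. -/
def valuesAt (L : Submodule F (Module.End F V)) (v : V) : Submodule F V :=
  L.map (LinearMap.applyₗ v : Module.End F V →ₗ[F] V)

/-- The subspace of the endomorphisms in `L` that vanish at `v`. -/
def vanishingAt (L : Submodule F (Module.End F V)) (v : V) : Submodule F (Module.End F V) :=
  L ⊓ LinearMap.ker (LinearMap.applyₗ v : Module.End F V →ₗ[F] V)

variable [FiniteDimensional F V]

theorem HasTraceOrthogonal.of_dualPair (D : DualPair F V) {K : Module.End F D.compl}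
    (hK : IsInvolutionMulUnipotent K) {z : V} (hz : D.ξ z = 1)
    (h : ∀ l ∈ L, ∀ c : F, l D.y = c • D.x →
      LinearMap.trace F D.compl (K * D.compress l) + D.η (l z) = -c) :
    HasTraceOrthogonal L := by
  obtain ⟨φ, hφ, hφx⟩ := exists_dual_apply_eq (S := L) (LinearMap.applyₗ D.y)
    (-(LinearMap.trace F D.compl ∘ₗ LinearMap.mulLeft F K ∘ₗ D.compress +
      D.η ∘ₗ LinearMap.applyₗ z)) (x := D.x) fun l hl c hc => neg_eq_iff_eq_neg.2 (h l hl c hc)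
  refine ⟨_, D.isInvolutionMulUnipotent_border hK hz hφx, fun l hl => ?_⟩
  have hφl : φ (l D.y) = -(LinearMap.trace F D.compl (K * D.compress l) + D.η (l z)) := hφ l hl
  rw [D.trace_border_mul, hφl]
  ring

theorem DualPair.exists_compress_small {x y : V} (hx : x ≠ 0) (hy : y ∉ F ∙ x)
    (hL : Module.finrank F L + 1 < Module.finrank F V) :
    ∃ D : DualPair F V, D.x = x ∧ D.y = y ∧ D.ξ ∉ L.map (LinearMap.compRight F D.η) ∧
      ((L ⊓ LinearMap.ker (LinearMap.compRight F D.η)).map D.compress = ⊥ ∨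
        Module.finrank F ((L ⊓ LinearMap.ker (LinearMap.compRight F D.η)).map D.compress) <
          Module.finrank F D.compl) := by
  obtain ⟨w, hw, hLw⟩ : ∃ w ∉ F ∙ x, (∀ l ∈ L, ∀ v, l v ∈ F ∙ x) ∨ ∃ l ∈ L, ∃ v, l v = w := by
    by_cases h : ∀ l ∈ L, ∀ v, l v ∈ F ∙ x
    · exact ⟨y, hy, .inl h⟩
    · push Not at h
      obtain ⟨l, hl, v, hv⟩ := h
      exact ⟨l v, hv, .inr ⟨l, hl, v, rfl⟩⟩
  obtain ⟨η, hηx, hηy, hηw⟩ := exists_dual_eq_zero_eq_one_ne_zero hy hw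
  obtain ⟨D, rfl, rfl, rfl, hD⟩ := DualPair.exists_ξ_notMem
    (S := L.map (LinearMap.compRight F η)) hx hηx hηy
    (lt_of_le_of_lt (Nat.add_le_add_right (Submodule.finrank_map_le _ L) 1) hL)
  refine ⟨D, rfl, rfl, hD, ?_⟩
  rcases hLw with hLx | ⟨l, hl, v, rfl⟩
  · left
    rw [eq_bot_iff]
    rintro _ ⟨l, hl, rfl⟩
    ext m
    obtain ⟨c, hc⟩ := Submodule.mem_span_singleton.1 (hLx l hl.1 m)
    rw [D.compress_apply, ← hc, map_smul, D.proj_x, smul_zero, LinearMap.zero_apply]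
  · right
    have hlt : L ⊓ LinearMap.ker (LinearMap.compRight F D.η) < L :=
      inf_lt_left.2 fun h => hηw (LinearMap.congr_fun (h hl) v)
    have h1 := Submodule.finrank_lt_finrank_of_lt hlt
    have h2 := Submodule.finrank_map_le D.compress
      (L ⊓ LinearMap.ker (LinearMap.compRight F D.η))
    have h3 := D.finrank_compl_add_two
    omega

theorem finrank_valuesAt_add_finrank_vanishingAt (v : V) :
    Module.finrank F (valuesAt L v) + Module.finrank F (vanishingAt L v) = Module.finrank F L := by
  set e : L →ₗ[F] V := LinearMap.applyₗ v ∘ₗ L.subtype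
  have hrange : LinearMap.range e = valuesAt L v := by
    rw [LinearMap.range_comp, Submodule.range_subtype, valuesAt]
  have hker : (LinearMap.ker e).map L.subtype = vanishingAt L v := by
    rw [LinearMap.ker_comp, Submodule.map_comap_subtype, vanishingAt]
  rw [← hrange, ← hker, Submodule.finrank_map_subtype_eq, e.finrank_range_add_finrank_ker]

theorem HasTraceOrthogonal.of_compl
    (ih : ∀ (D : DualPair F V) (L' : Submodule F (Module.End F D.compl)),
      L' = ⊥ ∨ Module.finrank F L' < Module.finrank F D.compl → HasTraceOrthogonal L')
    {y : V} (hy : y ≠ 0) (hval : valuesAt L y ≠ ⊤)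
    (hvan : Module.finrank F (vanishingAt L y) + 1 < Module.finrank F V) :
    HasTraceOrthogonal L := by
  have hline : F ∙ y ≠ ⊤ := fun h => by
    have := finrank_span_singleton (K := F) hy
    rw [h, finrank_top] at this
    omega
  obtain ⟨x, -, hxL, hxy⟩ := exists_mem_notMem_notMem (S := ⊤) (fun h => hval (top_le_iff.1 h))
    (fun h => hline (top_le_iff.1 h))
  have hx : x ≠ 0 := fun h => hxy (h ▸ zero_mem _)
  have hyx : y ∉ F ∙ x := notMem_span_singleton_comm hy hxy
  obtain ⟨D, rfl, rfl, hDξ, hD⟩ := DualPair.exists_compress_small hx hyx hvan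
  obtain ⟨K, hK, hKL⟩ := ih D _ hD
  have hker (l) (hl : l ∈ vanishingAt L D.y) (h : D.η ∘ₗ l = 0) :
      LinearMap.trace F D.compl (K * D.compress l) = 0 := hKL _ ⟨l, ⟨hl, h⟩, rfl⟩
  obtain ⟨z, hz, hξz⟩ := exists_vector_apply_eq (S := vanishingAt L D.y) (ξ := D.ξ)
    (LinearMap.compRight F D.η)
    (-(LinearMap.trace F D.compl ∘ₗ LinearMap.mulLeft F K ∘ₗ D.compress)) fun l hl c hc => by
      obtain rfl : c = 0 := by_contra fun h0 => hDξ
        ⟨c⁻¹ • l, (vanishingAt L D.y).smul_mem _ hl, by rw [map_smul, hc, inv_smul_smul₀ h0]⟩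
      exact neg_eq_zero.2 (hker l hl (hc.trans (zero_smul F _)))
  refine .of_dualPair D hK hξz fun l hl c hc => ?_
  obtain rfl : c = 0 := by_contra fun h0 => hxL
    ⟨c⁻¹ • l, L.smul_mem _ hl, by simp [hc, inv_smul_smul₀ h0]⟩
  have hzl : D.η (l z) = -LinearMap.trace F D.compl (K * D.compress l) :=
    hz l ⟨hl, hc.trans (zero_smul F _)⟩
  rw [hzl, add_neg_cancel, neg_zero]

theorem hasTraceOrthogonal_of_finrank_lt {F : Type*} [Field F] (n : ℕ) :
    ∀ {V : Type*} [AddCommGroup V] [Module F V] [FiniteDimensional F V], Module.finrank F V = n →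
      ∀ L : Submodule F (Module.End F V), L = ⊥ ∨ Module.finrank F L < n →
        HasTraceOrthogonal L := by
  induction n using Nat.strong_induction_on with
  | _ n ih =>
  rintro V _ _ _ rfl L (rfl | hL)
  · exact hasTraceOrthogonal_bot
  by_cases h0 : L = ⊥
  · exact h0 ▸ hasTraceOrthogonal_bot
  obtain ⟨l, hl, hl0⟩ := L.exists_mem_ne_zero_of_ne_bot h0
  obtain ⟨y, hy⟩ := DFunLike.ne_iff.1 hl0
  have hdim := finrank_valuesAt_add_finrank_vanishingAt (L := L) y
  refine .of_compl (fun D L' hL' => ih _ (by have := D.finrank_compl_add_two; omega) rfl L' hL')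
    (y := y) (fun h => hy (by rw [h, map_zero, map_zero])) (fun h => ?_) ?_
  · rw [h, finrank_top] at hdim
    omega
  · have : vanishingAt L y < L := inf_lt_left.2 fun h => hy (h hl)
    have := Submodule.finrank_lt_finrank_of_lt this
    omega

theorem hasTraceOrthogonal_of_two_le_finrank_valuesAt
    (hL : Module.finrank F L ≤ Module.finrank F V) {y : V}
    (h2 : 2 ≤ Module.finrank F (valuesAt L y)) (hy : valuesAt L y ≠ ⊤) : HasTraceOrthogonal L := by
  have hdim := finrank_valuesAt_add_finrank_vanishingAt (L := L) y
  refine .of_compl (fun D L' hL' => hasTraceOrthogonal_of_finrank_lt _ rfl L' hL') (y := y) ?_ hy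
    (by omega)
  rintro rfl
  have : valuesAt L 0 = ⊥ := eq_bot_iff.2 fun v ⟨l, _, hv⟩ => by simpa [eq_comm] using hv
  rw [this, finrank_bot] at h2
  omega

theorem hasTraceOrthogonal_of_vanishingAt_eq_bot (hV : 3 ≤ Module.finrank F V) {y u : V}
    (hy : vanishingAt L y = ⊥) {l : Module.End F V} (hl : l ∈ L) (hly : l y ∉ F ∙ y)
    (hlu : l u ∉ F ∙ l y) : HasTraceOrthogonal L := by
  have hx : l y ≠ 0 := fun h => hly (h ▸ zero_mem _)
  have hyx : y ∉ F ∙ l y := notMem_span_singleton_comm (fun h => hx (by rw [h, map_zero])) hly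
  obtain ⟨η, hηx, hηy, hηu⟩ := exists_dual_eq_zero_eq_one_ne_zero hyx hlu
  have hηl : η ∘ₗ l ≠ 0 := fun h => hηu (LinearMap.congr_fun h u)
  obtain ⟨D, hDx, rfl, rfl, hDξ⟩ := DualPair.exists_ξ_notMem (S := F ∙ (η ∘ₗ l)) hx hηx hηy
    (by rw [finrank_span_singleton hηl]; omega)
  set τ := LinearMap.trace F D.compl (1 * D.compress l) with hτ
  obtain ⟨z, hz, hξz⟩ := exists_vector_apply_eq (S := (⊤ : Submodule F F)) (ξ := D.ξ)
    (LinearMap.toSpanSingleton F _ (D.η ∘ₗ l)) (LinearMap.toSpanSingleton F F (-1 - τ))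
    fun a _ c hac => by
      obtain rfl : c = 0 := by_contra fun h0 => hDξ <| Submodule.mem_span_singleton.2
        ⟨c⁻¹ * a, by rw [mul_smul, show a • (D.η ∘ₗ l) = c • D.ξ from hac, inv_smul_smul₀ h0]⟩
      have ha : a = 0 := (smul_eq_zero.1 (hac.trans (zero_smul F _))).resolve_right hηl
      rw [ha, map_zero]
  replace hz : D.η (l z) = -1 - τ := by simpa using hz 1 Submodule.mem_top
  refine .of_dualPair D isInvolutionMulUnipotent_one hξz fun m hm c hc => ?_
  have hmc : m - c • l ∈ vanishingAt L D.y :=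
    ⟨L.sub_mem hm (L.smul_mem c hl), by simp [hc, hDx]⟩
  rw [hy, Submodule.mem_bot, sub_eq_zero] at hmc
  rw [hmc, map_smul, mul_smul_comm, map_smul, ← hτ, LinearMap.smul_apply, map_smul, hz,
    smul_eq_mul, smul_eq_mul]
  ring

end TraceOrthogonal

section RankOneSpace

variable {F V : Type*} [Field F] [AddCommGroup V] [Module F V]

/-- All elements of `L` have rank at most one, with their ranges in a common line or with a common
hyperplane in their kernels. -/
def IsRankOneSpace (L : Submodule F (Module.End F V)) : Prop :=
  (∃ x : V, ∀ l ∈ L, ∃ φ : Module.Dual F V, l = φ.smulRight x) ∨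
    ∃ ψ : Module.Dual F V, ∀ l ∈ L, ∃ z : V, l = ψ.smulRight z

theorem mem_span_singleton_of_finrank_le_one [FiniteDimensional F V] {S : Submodule F V}
    (hS : Module.finrank F S ≤ 1) {v w : V} (hv : v ∈ S) (hw : w ∈ S) (h0 : v ≠ 0) :
    w ∈ F ∙ v := by
  have hle : F ∙ v ≤ S := (Submodule.span_singleton_le_iff_mem v S).2 hv
  rwa [Submodule.eq_of_le_of_finrank_le hle (hS.trans_eq (finrank_span_singleton h0).symm)]

theorem mem_span_singleton_of_mem_of_mem {u v w : V} (hv : v ∈ F ∙ u) (hw : w ∈ F ∙ u)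
    (h0 : v ≠ 0) : w ∈ F ∙ v := by
  obtain ⟨a, rfl⟩ := Submodule.mem_span_singleton.1 hv
  obtain ⟨b, rfl⟩ := Submodule.mem_span_singleton.1 hw
  have ha : a ≠ 0 := left_ne_zero_of_smul h0
  exact Submodule.mem_span_singleton.2 ⟨b * a⁻¹, by rw [smul_smul, inv_mul_cancel_right₀ ha]⟩

theorem exists_eq_smulRight {f : Module.End F V} {x : V} (hf : ∀ v, f v ∈ F ∙ x) :
    ∃ φ : Module.Dual F V, f = φ.smulRight x := by
  by_cases hx : x = 0
  · refine ⟨0, LinearMap.ext fun v => ?_⟩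
    simpa [hx] using hf v
  obtain ⟨η, hη⟩ := Module.Projective.exists_dual_eq_one F hx
  refine ⟨η ∘ₗ f, LinearMap.ext fun v => ?_⟩
  obtain ⟨c, hc⟩ := Submodule.mem_span_singleton.1 (hf v)
  simp [← hc, hη]

variable {L : Submodule F (Module.End F V)}

theorem exists_eq_smul_one_of_forall_mem_span_singleton {f : Module.End F V}
    (hf : ∀ v, f v ∈ F ∙ v) : ∃ a : F, f = a • 1 := by
  refine LinearMap.exists_eq_smul_id_of_forall_notLinearIndependent fun v hv => ?_
  obtain ⟨c, hc⟩ := Submodule.mem_span_singleton.1 (hf v)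
  have := LinearIndependent.pair_iff.1 hv c (-1) (by rw [hc, neg_one_smul, add_neg_cancel])
  exact one_ne_zero (neg_eq_zero.1 this.2)

theorem exists_eq_smul_one_of_forall_notMem (h2 : (2 : F) ≠ 0) {S : Submodule F V}
    (hS : S ≠ ⊤) {f : Module.End F V} (hf : ∀ v ∉ S, f v ∈ F ∙ v) : ∃ a : F, f = a • 1 := by
  refine exists_eq_smul_one_of_forall_mem_span_singleton fun v => ?_
  by_cases hv : v ∈ S
  swap
  · exact hf v hv
  obtain ⟨w, -, hw⟩ := SetLike.exists_of_lt (lt_top_iff_ne_top.2 hS)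
  obtain ⟨a, ha⟩ := Submodule.mem_span_singleton.1 (hf w hw)
  obtain ⟨b, hb⟩ := Submodule.mem_span_singleton.1
    (hf (w + v) fun h => hw ((S.add_mem_iff_left hv).1 h))
  obtain ⟨c, hc⟩ := Submodule.mem_span_singleton.1
    (hf (w - v) fun h => hw ((S.sub_mem_iff_left hv).1 h))
  rw [map_add] at hb
  rw [map_sub] at hc
  have hwv : (2 * a - b - c) • w = (b - c) • v := by
    linear_combination (norm := module) (2 : F) • ha - hb - hc
  have h0 : 2 * a - b - c = 0 := by_contra fun h =>
    hw ((S.smul_mem_iff h).1 (hwv ▸ S.smul_mem _ hv))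
  rw [h0, zero_smul, eq_comm, smul_eq_zero] at hwv
  rcases hwv with hbc | rfl
  · have hab : a = b := mul_left_cancel₀ h2 (by linear_combination h0 - hbc)
    refine Submodule.mem_span_singleton.2 ⟨b, ?_⟩
    rw [smul_add, ← ha, hab] at hb
    exact add_left_cancel hb
  · rw [map_zero]
    exact zero_mem _

theorem exists_forall_eq_smulRight (h2 : (2 : F) ≠ 0) {y : V} (hy : F ∙ y ≠ ⊤)
    (hval : valuesAt L y = ⊤) (hvan : vanishingAt L y = ⊥)
    (h : ∀ l ∈ L, l y ∉ F ∙ y → ∀ u, l u ∈ F ∙ l y) :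
    ∃ ψ : Module.Dual F V, ∀ l ∈ L, ∃ z : V, l = ψ.smulRight z := by
  have hbij : Function.Bijective (LinearMap.applyₗ y ∘ₗ L.subtype : L →ₗ[F] V) := by
    refine ⟨(injective_iff_map_eq_zero _).2 fun l hl => Subtype.ext ?_, fun v => ?_⟩
    · exact (Submodule.mem_bot F).1 (hvan ▸ ⟨l.2, hl⟩)
    · obtain ⟨l, hl, hlv⟩ : v ∈ valuesAt L y := hval ▸ Submodule.mem_top
      exact ⟨⟨l, hl⟩, hlv⟩
  set e := LinearEquiv.ofBijective _ hbij
  have hscalar (u : V) : ∃ a : F, ∀ l ∈ L, l u = a • l y := by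
    obtain ⟨a, ha⟩ := exists_eq_smul_one_of_forall_notMem h2 hy
      (f := LinearMap.applyₗ u ∘ₗ L.subtype ∘ₗ e.symm.toLinearMap) fun v hv => by
        obtain ⟨l, rfl⟩ := e.surjective v
        change (e.symm (e l)).1 u ∈ F ∙ l.1 y
        rw [e.symm_apply_apply]
        exact h l l.2 hv u
    refine ⟨a, fun l hl => ?_⟩
    have hl' : (e.symm (e ⟨l, hl⟩)).1 u = a • l y := LinearMap.congr_fun ha (e ⟨l, hl⟩)
    rwa [e.symm_apply_apply] at hl'
  obtain ⟨w, -, hw⟩ := SetLike.exists_of_lt (lt_top_iff_ne_top.2 hy)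
  obtain ⟨η, hη⟩ := Module.Projective.exists_dual_eq_one F (x := w)
    fun h => hw (h ▸ zero_mem (F ∙ y))
  obtain ⟨l₀, hl₀, hl₀w⟩ : w ∈ valuesAt L y := hval ▸ Submodule.mem_top
  replace hl₀w : l₀ y = w := hl₀w
  refine ⟨η ∘ₗ l₀, fun l hl => ⟨l y, LinearMap.ext fun u => ?_⟩⟩
  obtain ⟨a, ha⟩ := hscalar u
  simp [ha l hl, ha l₀ hl₀, hl₀w, hη]

variable [FiniteDimensional F V]

theorem apply_mem_span_singleton_of_apply_eq_zero
    (hL : ∀ v, Module.finrank F (valuesAt L v) ≤ 1) {l m : Module.End F V} (hl : l ∈ L)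
    (hm : m ∈ L) {v y : V} (hmv : m v = 0) (hmy : m y ≠ 0) : l v ∈ F ∙ m y := by
  have hy : l y ∈ F ∙ m y :=
    mem_span_singleton_of_finrank_le_one (hL y) ⟨m, hm, rfl⟩ ⟨l, hl, rfl⟩ hmy
  have hmyv : m (y + v) = m y := by rw [map_add, hmv, add_zero]
  have hyv : l (y + v) ∈ F ∙ m (y + v) :=
    mem_span_singleton_of_finrank_le_one (hL (y + v)) ⟨m, hm, rfl⟩ ⟨l, hl, rfl⟩ (hmyv ▸ hmy)
  rw [hmyv, map_add] at hyv
  exact (Submodule.add_mem_iff_right _ hy).1 hyv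

theorem exists_forall_apply_mem_span_singleton (h2 : 2 ≤ Module.finrank F L)
    (hL : ∀ v, Module.finrank F (valuesAt L v) ≤ 1) :
    ∃ x : V, ∀ l ∈ L, ∀ v, l v ∈ F ∙ x := by
  obtain ⟨l₀, hl₀, hne⟩ := L.exists_mem_ne_zero_of_ne_bot (by rintro rfl; simp at h2)
  obtain ⟨v₀, hv₀⟩ := DFunLike.ne_iff.1 hne
  refine ⟨l₀ v₀, fun l hl v => ?_⟩
  suffices ∃ (m : Module.End F V) (y : V), l₀ v₀ ∈ F ∙ m y ∧ l v ∈ F ∙ m y by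
    obtain ⟨m, y, h₀, h⟩ := this
    exact mem_span_singleton_of_mem_of_mem h₀ h hv₀
  have hdim := finrank_valuesAt_add_finrank_vanishingAt (L := L) (v₀ + v)
  obtain ⟨m, ⟨hm, hmv⟩, hm0⟩ := (vanishingAt L (v₀ + v)).exists_mem_ne_zero_of_ne_bot (by
    intro h
    rw [h, finrank_bot] at hdim
    have := hL (v₀ + v)
    omega)
  have hmv : m v = -m v₀ := eq_neg_of_add_eq_zero_right ((map_add m v₀ v).symm.trans hmv)
  by_cases hmv₀ : m v₀ = 0
  · obtain ⟨y, hy⟩ := DFunLike.ne_iff.1 hm0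
    rw [hmv₀, neg_zero] at hmv
    exact ⟨m, y, apply_mem_span_singleton_of_apply_eq_zero hL hl₀ hm hmv₀ hy,
      apply_mem_span_singleton_of_apply_eq_zero hL hl hm hmv hy⟩
  · refine ⟨m, v₀, mem_span_singleton_of_finrank_le_one (hL v₀) ⟨m, hm, rfl⟩ ⟨l₀, hl₀, rfl⟩ hmv₀,
      mem_span_singleton_of_finrank_le_one (hL v) ⟨-m, L.neg_mem hm, ?_⟩ ⟨l, hl, rfl⟩ hmv₀⟩
    simp [hmv]

theorem isRankOneSpace_of_forall (h2 : (2 : F) ≠ 0) (hV : 2 ≤ Module.finrank F V)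
    (hL : Module.finrank F L = Module.finrank F V)
    (hval : ∀ y, 2 ≤ Module.finrank F (valuesAt L y) → valuesAt L y = ⊤)
    (hvan : ∀ y, vanishingAt L y = ⊥ → ∀ l ∈ L, l y ∉ F ∙ y → ∀ u, l u ∈ F ∙ l y) :
    IsRankOneSpace L := by
  by_cases h : ∀ v, Module.finrank F (valuesAt L v) ≤ 1
  · obtain ⟨x, hx⟩ := exists_forall_apply_mem_span_singleton (by omega) h
    exact .inl ⟨x, fun l hl => exists_eq_smulRight (hx l hl)⟩
  push Not at h
  obtain ⟨y, hy⟩ := h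
  have hdim := finrank_valuesAt_add_finrank_vanishingAt (L := L) y
  have hbot : vanishingAt L y = ⊥ := by
    rw [hval y hy, finrank_top] at hdim
    exact Submodule.finrank_eq_zero.1 (by omega)
  refine .inr (exists_forall_eq_smulRight h2 (fun h => ?_) (hval y hy) hbot (hvan y hbot))
  have := (finrank_span_le_card (R := F) ({y} : Set V)).trans (by simp : _ ≤ 1)
  rw [h, finrank_top] at this
  omega

theorem isRankOneSpace_of_not_hasTraceOrthogonal (h2 : (2 : F) ≠ 0)
    (hV : 3 ≤ Module.finrank F V) (hL : Module.finrank F L = Module.finrank F V)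
    (h : ¬ HasTraceOrthogonal L) : IsRankOneSpace L :=
  isRankOneSpace_of_forall h2 (by omega) hL
    (fun _ hy => by_contra fun hval =>
      h (hasTraceOrthogonal_of_two_le_finrank_valuesAt hL.le hy hval))
    fun _ hy _ hl hly _ => by_contra fun hlu =>
      h (hasTraceOrthogonal_of_vanishingAt_eq_bot hV hy hl hly hlu)

theorem isRankOneSpace_of_forall_ker_ne_bot (h2 : (2 : F) ≠ 0) (hV : Module.finrank F V = 2)
    (hL : Module.finrank F L = 2) (hker : ∀ l ∈ L, LinearMap.ker l ≠ ⊥) :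
    IsRankOneSpace L := by
  refine isRankOneSpace_of_forall h2 hV.ge (hL.trans hV.symm) (fun _ hy => ?_)
    fun y _ l hl hly u => ?_
  · exact Submodule.eq_top_of_finrank_eq (le_antisymm (Submodule.finrank_le _) (hV ▸ hy))
  · have hrange := l.finrank_range_add_finrank_ker
    have := Submodule.one_le_finrank_iff.2 (hker l hl)
    exact mem_span_singleton_of_finrank_le_one (S := LinearMap.range l) (by omega) ⟨y, rfl⟩ ⟨u, rfl⟩
      fun h => hly (h ▸ zero_mem _)

end RankOneSpace

section LeftFactor

variable {F ι κ ι' : Type*} [Field F]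

theorem vecMulVec_right_injective {v : ι → F} (hv : v ≠ 0) :
    Function.Injective (vecMulVec v : (κ → F) → Matrix ι κ F) := by
  intro g h hgh
  obtain ⟨i, hi⟩ := Function.ne_iff.1 hv
  exact funext fun j => mul_left_cancel₀ hi (congrFun₂ hgh i j)

theorem mem_span_singleton_of_vecMulVec_eq {v w : ι → F} {g h : κ → F} (hg : g ≠ 0)
    (hgh : vecMulVec v g = vecMulVec w h) : v ∈ F ∙ w := by
  obtain ⟨j, hj⟩ := Function.ne_iff.1 hg
  refine Submodule.mem_span_singleton.2 ⟨(g j)⁻¹ * h j, funext fun i => ?_⟩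
  have hij : v i * g j = w i * h j := congrFun₂ hgh i j
  rw [Pi.smul_apply, smul_eq_mul, mul_assoc, mul_comm (h j), ← hij, mul_comm (v i),
    inv_mul_cancel_left₀ hj]

theorem mem_span_singleton_of_vecMulVec_add_eq {v w u : ι → F} {g h k : κ → F}
    (hvw : v ∉ F ∙ w) (hw : w ≠ 0) (hg : g ≠ 0)
    (hsum : vecMulVec v g + vecMulVec w h = vecMulVec u k) : h ∈ F ∙ g := by
  obtain ⟨i, hi⟩ := Function.ne_iff.1 hw
  replace hi : w i ≠ 0 := hi
  obtain ⟨j, hj⟩ : ∃ j, v j * w i - v i * w j ≠ 0 := by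
    by_contra! hall
    refine hvw (Submodule.mem_span_singleton.2 ⟨v i / w i, funext fun j => ?_⟩)
    rw [Pi.smul_apply, smul_eq_mul, div_mul_eq_mul_div, ← sub_eq_zero.1 (hall j),
      mul_div_cancel_right₀ _ hi]
  have hrow (a : ι) (b : κ) : v a * g b + w a * h b = u a * k b := congrFun₂ hsum a b
  set d := v j * w i - v i * w j with hd
  have hgk : g = (d⁻¹ * (w i * u j - w j * u i)) • k := by
    funext b
    rw [Pi.smul_apply, smul_eq_mul, mul_assoc, eq_inv_mul_iff_mul_eq₀ hj, hd]
    linear_combination w i * hrow j b - w j * hrow i b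
  have hhk : h = (d⁻¹ * (v j * u i - v i * u j)) • k := by
    funext b
    rw [Pi.smul_apply, smul_eq_mul, mul_assoc, eq_inv_mul_iff_mul_eq₀ hj, hd]
    linear_combination v j * hrow i b - v i * hrow j b
  exact mem_span_singleton_of_mem_of_mem (Submodule.mem_span_singleton.2 ⟨_, hgk.symm⟩)
    (Submodule.mem_span_singleton.2 ⟨_, hhk.symm⟩) hg

/-- `S` maps the matrices `v ⊗ g` to matrices `x ⊗ k` with a common left factor `x`. -/
def PreservesLeftFactorAt (S : Matrix ι κ F →ₗ[F] Matrix ι' κ F) (v : ι → F) : Prop :=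
  ∃ x : ι' → F, ∀ g, ∃ k, S (vecMulVec v g) = vecMulVec x k

variable {S : Matrix ι κ F →ₗ[F] Matrix ι' κ F}

theorem PreservesLeftFactorAt.exists_linearEquiv [Finite κ] [Nonempty κ]
    (hS : Function.Injective S) {v : ι → F} (hv : v ≠ 0) (h : PreservesLeftFactorAt S v) :
    ∃ x ≠ 0, ∃ R : (κ → F) ≃ₗ[F] (κ → F), ∀ g, S (vecMulVec v g) = vecMulVec x (R g) := by
  obtain ⟨x, hx⟩ := h
  have hinj : Function.Injective fun g => S (vecMulVec v g) :=
    hS.comp (vecMulVec_right_injective hv)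
  have hx0 : x ≠ 0 := by
    rintro rfl
    obtain ⟨g, hg⟩ := exists_ne (0 : κ → F)
    refine hg (hinj ?_)
    obtain ⟨k, hk⟩ := hx g
    obtain ⟨k', hk'⟩ := hx 0
    exact (hk.trans (zero_vecMulVec k)).trans (hk'.trans (zero_vecMulVec k')).symm
  obtain ⟨i, hi⟩ := Function.ne_iff.1 hx0
  let R : (κ → F) →ₗ[F] (κ → F) :=
    (x i)⁻¹ • LinearMap.proj i ∘ₗ (ofLinearEquiv F).symm.toLinearMap ∘ₗ S ∘ₗ vecMulVecBilin F F v
  have hSR (g : κ → F) : S (vecMulVec v g) = vecMulVec x (R g) := by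
    obtain ⟨k, hk⟩ := hx g
    have hRg : R g = k := by
      change (x i)⁻¹ • S (vecMulVec v g) i = k
      rw [hk]
      exact inv_smul_smul₀ hi k
    rw [hk, hRg]
  have hRinj : Function.Injective R := fun g h hgh => hinj (by simp only [hSR, hgh])
  exact ⟨x, hx0, LinearEquiv.ofInjectiveEndo R hRinj, hSR⟩

theorem exists_vecMulVec_eq_of_forall_preservesLeftFactorAt [Finite κ] [Nonempty κ]
    (hS : Function.Injective S) (h : ∀ v ≠ 0, PreservesLeftFactorAt S v)
    {v₀ : ι → F} {x₀ : ι' → F} {R₀ : (κ → F) ≃ₗ[F] (κ → F)} (hv₀ : v₀ ≠ 0)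
    (hR₀ : ∀ g, S (vecMulVec v₀ g) = vecMulVec x₀ (R₀ g)) (v : ι → F) :
    ∃ y, ∀ g, S (vecMulVec v g) = vecMulVec y (R₀ g) := by
  by_cases hv : v ∈ F ∙ v₀
  · obtain ⟨c, rfl⟩ := Submodule.mem_span_singleton.1 hv
    exact ⟨c • x₀, fun g => by rw [smul_vecMulVec, map_smul, hR₀, smul_vecMulVec]⟩
  have hv0 : v ≠ 0 := fun h => hv (h ▸ zero_mem _)
  obtain ⟨x, hx, R, hR⟩ := (h v hv0).exists_linearEquiv hS hv0
  have hxx₀ : x₀ ∉ F ∙ x := by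
    intro hmem
    obtain ⟨c, rfl⟩ := Submodule.mem_span_singleton.1 hmem
    obtain ⟨g, hg⟩ := exists_ne (0 : κ → F)
    have hmap : S (vecMulVec v₀ g) = S (vecMulVec v (R.symm (c • R₀ g))) := by
      rw [hR₀, hR, R.apply_symm_apply, smul_vecMulVec, vecMulVec_smul]
    exact notMem_span_singleton_comm hv₀ hv (mem_span_singleton_of_vecMulVec_eq hg (hS hmap))
  obtain ⟨u, hu⟩ := h (v₀ + v) fun h0 => hv (by
    rw [eq_neg_of_add_eq_zero_right h0]
    exact neg_mem (Submodule.mem_span_singleton_self v₀))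
  obtain ⟨a, ha⟩ : ∃ a : F, R.toLinearMap ∘ₗ R₀.symm.toLinearMap = a • 1 := by
    refine exists_eq_smul_one_of_forall_mem_span_singleton fun g => ?_
    by_cases hg : g = 0
    · rw [hg, map_zero]
      exact zero_mem _
    obtain ⟨k, hk⟩ := hu (R₀.symm g)
    rw [add_vecMulVec, map_add, hR₀, hR, R₀.apply_symm_apply] at hk
    exact mem_span_singleton_of_vecMulVec_add_eq hxx₀ hx hg hk
  refine ⟨a • x, fun g => ?_⟩
  have hRg : R g = a • R₀ g := by simpa using LinearMap.congr_fun ha (R₀ g)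
  rw [hR, hRg, vecMulVec_smul, smul_vecMulVec]

theorem exists_eq_mul_mul_of_forall_preservesLeftFactorAt [Fintype ι] [Nonempty ι]
    [Fintype κ] [Nonempty κ] (hS : Function.Injective S) (h : ∀ v ≠ 0, PreservesLeftFactorAt S v) :
    ∃ (P : Matrix ι' ι F) (Q : Matrix κ κ F), ∀ Y, S Y = P * Y * Q := by
  classical
  obtain ⟨v₀, hv₀⟩ := exists_ne (0 : ι → F)
  obtain ⟨x₀, -, R₀, hR₀⟩ := (h v₀ hv₀).exists_linearEquiv hS hv₀
  choose y hy using exists_vecMulVec_eq_of_forall_preservesLeftFactorAt hS h hv₀ hR₀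
  refine ⟨Matrix.of fun i j => y (Pi.single j 1) i, (LinearMap.toMatrix' R₀.toLinearMap)ᵀ,
    fun Y => ?_⟩
  have hY : Y = ∑ i, vecMulVec (Pi.single i 1) (Y i) := by
    ext a b
    simp [Matrix.sum_apply, vecMulVec_apply, Pi.single_apply]
  conv_lhs => rw [hY]
  conv_rhs => rw [hY]
  rw [map_sum, Matrix.mul_sum, Matrix.sum_mul]
  refine Finset.sum_congr rfl fun i _ => ?_
  have hP : (Matrix.of fun i j => y (Pi.single j 1) i) *ᵥ Pi.single i 1 = y (Pi.single i 1) := by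
    ext k
    simp
  rw [hy, mul_vecMulVec, vecMulVec_mul, hP, vecMul_transpose, LinearMap.toMatrix'_mulVec]
  rfl

end LeftFactor

section Transpose

variable {F ι : Type*} [Field F] [Nonempty ι]

theorem forall_preservesLeftFactorAt_or_forall [Finite ι]
    {S : Matrix ι ι F →ₗ[F] Matrix ι ι F} (hS : Function.Injective S)
    (h : ∀ v ≠ 0, PreservesLeftFactorAt S v ∨
      PreservesLeftFactorAt ((transposeLinearEquiv ι ι F F).toLinearMap ∘ₗ S) v) :
    (∀ v ≠ 0, PreservesLeftFactorAt S v) ∨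
      ∀ v ≠ 0, PreservesLeftFactorAt ((transposeLinearEquiv ι ι F F).toLinearMap ∘ₗ S) v := by
  set S' := (transposeLinearEquiv ι ι F F).toLinearMap ∘ₗ S
  have hS' : Function.Injective S' := (transposeLinearEquiv ι ι F F).injective.comp hS
  by_contra! hne
  obtain ⟨⟨v, hv, hvS⟩, w, hw, hwS'⟩ := hne
  obtain ⟨x, -, R, hR⟩ := ((h v hv).resolve_left hvS).exists_linearEquiv hS' hv
  have hwS := (h w hw).resolve_right hwS'
  obtain ⟨z, hz, Q, hQ⟩ := hwS.exists_linearEquiv hS hw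
  have hmap : S' (vecMulVec v (R.symm z)) = S' (vecMulVec w (Q.symm x)) := by
    rw [hR, R.apply_symm_apply]
    change _ = (S (vecMulVec w (Q.symm x)))ᵀ
    rw [hQ, Q.apply_symm_apply, transpose_vecMulVec]
  obtain ⟨c, rfl⟩ := Submodule.mem_span_singleton.1 <|
    mem_span_singleton_of_vecMulVec_eq (R.symm.map_ne_zero_iff.2 hz) (hS' hmap)
  exact hvS ⟨z, fun g => ⟨c • Q g, by rw [smul_vecMulVec, map_smul, hQ, vecMulVec_smul]⟩⟩

theorem exists_eq_mul_mul_or_eq_mul_transpose_mul [Fintype ι]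
    {S : Matrix ι ι F →ₗ[F] Matrix ι ι F} (hS : Function.Injective S)
    (h : ∀ v ≠ 0, PreservesLeftFactorAt S v ∨
      PreservesLeftFactorAt ((transposeLinearEquiv ι ι F F).toLinearMap ∘ₗ S) v) :
    ∃ P Q : Matrix ι ι F, (∀ Y, S Y = P * Y * Q) ∨ ∀ Y, S Y = P * Yᵀ * Q := by
  rcases forall_preservesLeftFactorAt_or_forall hS h with h | h
  · obtain ⟨P, Q, hPQ⟩ := exists_eq_mul_mul_of_forall_preservesLeftFactorAt hS h
    exact ⟨P, Q, .inl hPQ⟩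
  · have hS' : Function.Injective ((transposeLinearEquiv ι ι F F).toLinearMap ∘ₗ S) :=
      (transposeLinearEquiv ι ι F F).injective.comp hS
    obtain ⟨P, Q, hPQ⟩ := exists_eq_mul_mul_of_forall_preservesLeftFactorAt hS' h
    refine ⟨Qᵀ, Pᵀ, .inr fun Y => ?_⟩
    rw [← transpose_mul, ← transpose_mul, ← Matrix.mul_assoc, ← hPQ]
    exact (transpose_transpose (S Y)).symm

end Transpose

section TraceAdjoint

variable {R ι : Type*} [CommRing R] [Fintype ι] [DecidableEq ι]

/-- The adjoint of a linear map of matrices with respect to the trace form `trace (X * Y)`. -/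
def traceAdjoint (T : Matrix ι ι R →ₗ[R] Matrix ι ι R) : Matrix ι ι R →ₗ[R] Matrix ι ι R where
  toFun Y := Matrix.of fun j i => trace (T (Matrix.single i j 1) * Y)
  map_add' Y Z := by ext; simp [Matrix.mul_add]
  map_smul' c Y := by ext; simp

variable {T : Matrix ι ι R →ₗ[R] Matrix ι ι R}

theorem trace_mul_traceAdjoint (X Y : Matrix ι ι R) :
    trace (X * traceAdjoint T Y) = trace (T X * Y) := by
  suffices traceLinearMap ι R R ∘ₗ LinearMap.mulRight R (traceAdjoint T Y) =
      traceLinearMap ι R R ∘ₗ LinearMap.mulRight R Y ∘ₗ T from LinearMap.congr_fun this X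
  refine Matrix.ext_linearMap R fun i j => LinearMap.ext_ring ?_
  exact (Matrix.trace_single_mul ..).trans (one_smul R _)

theorem traceAdjoint_injective (hT : Function.Surjective T) :
    Function.Injective (traceAdjoint T) := by
  intro Y Z hYZ
  refine Matrix.ext_iff_trace_mul_left.2 fun X => ?_
  obtain ⟨W, rfl⟩ := hT X
  rw [← trace_mul_traceAdjoint, ← trace_mul_traceAdjoint, hYZ]

theorem eq_mul_mul_of_traceAdjoint_eq {P Q : Matrix ι ι R}
    (h : ∀ Y, traceAdjoint T Y = P * Y * Q) (X : Matrix ι ι R) : T X = Q * X * P := by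
  refine Matrix.ext_iff_trace_mul_right.2 fun Y => ?_
  rw [← trace_mul_traceAdjoint, h, ← Matrix.mul_assoc, trace_mul_comm, Matrix.mul_assoc Q X P,
    Matrix.mul_assoc Q, Matrix.mul_assoc X P Y, ← Matrix.mul_assoc X]

theorem eq_mul_transpose_mul_of_traceAdjoint_eq {P Q : Matrix ι ι R}
    (h : ∀ Y, traceAdjoint T Y = P * Yᵀ * Q) (X : Matrix ι ι R) : T X = Pᵀ * Xᵀ * Qᵀ := by
  refine Matrix.ext_iff_trace_mul_right.2 fun Y => ?_
  rw [← trace_mul_traceAdjoint, h, ← trace_transpose (X * _)]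
  simp only [transpose_mul, transpose_transpose, Matrix.mul_assoc]
  rw [← Matrix.mul_assoc Qᵀ Y, trace_mul_comm, Matrix.mul_assoc]

end TraceAdjoint

section RankOneImage

variable {F ι : Type*} [Field F] [Fintype ι] [DecidableEq ι]

theorem toMatrix'_smulRight (φ : (ι → F) →ₗ[F] F) (x : ι → F) :
    LinearMap.toMatrix' (φ.smulRight x) = vecMulVec x fun j => φ (Pi.single j 1) := by
  ext i j
  simp [LinearMap.toMatrix'_apply, vecMulVec_apply, mul_comm]

/-- The space of the operators `S (v ⊗ g)`, where `g` ranges over all vectors. -/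
def leftFactorImage (S : Matrix ι ι F →ₗ[F] Matrix ι ι F) (v : ι → F) :
    Submodule F (Module.End F (ι → F)) :=
  LinearMap.range (Matrix.toLin'.toLinearMap ∘ₗ S ∘ₗ vecMulVecBilin F F v)

variable {S : Matrix ι ι F →ₗ[F] Matrix ι ι F} {v : ι → F}

theorem finrank_leftFactorImage (hS : Function.Injective S) (hv : v ≠ 0) :
    Module.finrank F (leftFactorImage S v) = Module.finrank F (ι → F) :=
  LinearMap.finrank_range_of_inj
    (Matrix.toLin'.injective.comp (hS.comp (vecMulVec_right_injective hv)))

theorem preservesLeftFactorAt_or_of_isRankOneSpace (h : IsRankOneSpace (leftFactorImage S v)) :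
    PreservesLeftFactorAt S v ∨
      PreservesLeftFactorAt ((transposeLinearEquiv ι ι F F).toLinearMap ∘ₗ S) v := by
  have hmem (g : ι → F) : toLin' (S (vecMulVec v g)) ∈ leftFactorImage S v := ⟨g, rfl⟩
  rcases h with ⟨x, hx⟩ | ⟨ψ, hψ⟩
  · refine .inl ⟨x, fun g => ?_⟩
    obtain ⟨φ, hφ⟩ := hx _ (hmem g)
    exact ⟨_, by rw [← toMatrix'_smulRight, ← hφ, LinearMap.toMatrix'_toLin']⟩
  · refine .inr ⟨fun j => ψ (Pi.single j 1), fun g => ?_⟩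
    obtain ⟨z, hz⟩ := hψ _ (hmem g)
    have hS : S (vecMulVec v g) = vecMulVec z fun j => ψ (Pi.single j 1) := by
      rw [← toMatrix'_smulRight, ← hz, LinearMap.toMatrix'_toLin']
    exact ⟨z, (congrArg transpose hS).trans (transpose_vecMulVec ..)⟩

theorem exists_eq_mul_mul_or_of_forall_isRankOneSpace [Nonempty ι] (hS : Function.Injective S)
    (h : ∀ v ≠ 0, IsRankOneSpace (leftFactorImage S v)) :
    ∃ P Q : Matrix ι ι F, (∀ Y, S Y = P * Y * Q) ∨ ∀ Y, S Y = P * Yᵀ * Q :=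
  exists_eq_mul_mul_or_eq_mul_transpose_mul hS fun v hv =>
    preservesLeftFactorAt_or_of_isRankOneSpace (h v hv)

theorem not_hasTraceOrthogonal_leftFactorImage_traceAdjoint
    {T : Matrix ι ι F →ₗ[F] Matrix ι ι F}
    (hT : ∀ A, IsInvolutionMulUnipotent (toLin' A) → IsUnit (T A)) (hv : v ≠ 0) :
    ¬ HasTraceOrthogonal (leftFactorImage (traceAdjoint T) v) := by
  rintro ⟨A, hA, horth⟩
  obtain ⟨A, rfl⟩ := toLin'.surjective A
  have hkill : T A *ᵥ v = 0 := by
    refine dotProduct_eq_zero _ fun g => ?_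
    rw [← trace_vecMulVec, ← mul_vecMulVec, ← trace_mul_traceAdjoint, ← trace_toLin'_eq, toLin'_mul]
    exact horth _ ⟨g, rfl⟩
  exact hv (mulVec_injective_iff_isUnit.2 (hT A hA) (hkill.trans (mulVec_zero _).symm))

end RankOneImage

section ThreeInvolutions

variable {F : Type*} [Field F] {n : ℕ} {A : Matrix (Fin n) (Fin n) F}

theorem mem_prodInv3_of_isInvolutionMulUnipotent (h2 : (2 : F) ≠ 0)
    (hA : IsInvolutionMulUnipotent (toLin' A)) : A ∈ ProdInv3 F n := by
  have h2' : IsUnit (2 : Module.End F (Fin n → F)) := by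
    have h := (IsUnit.mk0 _ h2).map (algebraMap F (Module.End F (Fin n → F)))
    rwa [map_ofNat] at h
  obtain ⟨J, K, L, hJ, hK, hL, hJKL⟩ := hA.exists_three_involutions h2'
  refine ⟨J.toMatrix', K.toMatrix', L.toMatrix', ?_, ?_, ?_, ?_⟩
  · rw [← LinearMap.toMatrix'_mul, hJ, LinearMap.toMatrix'_one]
  · rw [← LinearMap.toMatrix'_mul, hK, LinearMap.toMatrix'_one]
  · rw [← LinearMap.toMatrix'_mul, hL, LinearMap.toMatrix'_one]
  · rw [← LinearMap.toMatrix'_mul, ← LinearMap.toMatrix'_mul, ← hJKL, LinearMap.toMatrix'_toLin']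

theorem det_mul_det_of_mem_prodInv3 (hA : A ∈ ProdInv3 F n) : A.det * A.det = 1 := by
  obtain ⟨J, K, L, hJ, hK, hL, rfl⟩ := hA
  have hdet {M : Matrix (Fin n) (Fin n) F} (hM : M * M = 1) : M.det * M.det = 1 := by
    rw [← det_mul, hM, det_one]
  rw [det_mul, det_mul, mul_mul_mul_comm, mul_mul_mul_comm J.det, hdet hJ, hdet hK, hdet hL,
    one_mul, one_mul]

theorem isUnit_of_mem_prodInv3 (hA : A ∈ ProdInv3 F n) : IsUnit A :=
  (isUnit_iff_isUnit_det A).2 (IsUnit.of_mul_eq_one _ (det_mul_det_of_mem_prodInv3 hA))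

theorem transpose_mem_prodInv3 (hA : A ∈ ProdInv3 F n) : Aᵀ ∈ ProdInv3 F n := by
  obtain ⟨J, K, L, hJ, hK, hL, rfl⟩ := hA
  refine ⟨Lᵀ, Kᵀ, Jᵀ, ?_, ?_, ?_, ?_⟩
  · rw [← transpose_mul, hL, transpose_one]
  · rw [← transpose_mul, hK, transpose_one]
  · rw [← transpose_mul, hJ, transpose_one]
  · rw [transpose_mul, transpose_mul, Matrix.mul_assoc]

theorem conj_mem_prodInv3 (hA : A ∈ ProdInv3 F n) (u : (Matrix (Fin n) (Fin n) F)ˣ) :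
    u.val * A * u⁻¹.val ∈ ProdInv3 F n := by
  obtain ⟨J, K, L, hJ, hK, hL, rfl⟩ := hA
  let c := MulSemiringAction.toRingHom (ConjAct (Matrix (Fin n) (Fin n) F)ˣ)
    (Matrix (Fin n) (Fin n) F) (ConjAct.toConjAct u)
  exact ⟨c J, c K, c L, by rw [← map_mul, hJ, map_one], by rw [← map_mul, hK, map_one],
    by rw [← map_mul, hL, map_one], by rw [← map_mul, ← map_mul]; rfl⟩

theorem mul_mem_lambdaSet_iff (P : Matrix (Fin n) (Fin n) F) (u : (Matrix (Fin n) (Fin n) F)ˣ) :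
    P * u.val ∈ LambdaSet F n ↔ ∀ A ∈ ProdInv3 F n, P * A * u.val ∈ ProdInv3 F n := by
  constructor
  · intro h A hA
    have hmem := h _ (conj_mem_prodInv3 hA u⁻¹)
    rwa [inv_inv, ← Matrix.mul_assoc, ← Matrix.mul_assoc, Units.mul_inv_cancel_right] at hmem
  · intro h A hA
    have hmem := h _ (conj_mem_prodInv3 hA u)
    rwa [Matrix.mul_assoc P, Units.inv_mul_cancel_right, ← Matrix.mul_assoc] at hmem

end ThreeInvolutions

theorem exists_eq_mul_mul_or_of_three_le {F : Type*} [Field F] (h2 : (2 : F) ≠ 0) {n : ℕ}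
    (hn : 3 ≤ n) {T : Matrix (Fin n) (Fin n) F →ₗ[F] Matrix (Fin n) (Fin n) F}
    (hT : Function.Bijective T) (h : ∀ A ∈ ProdInv3 F n, T A ∈ ProdInv3 F n) :
    ∃ P Q : Matrix (Fin n) (Fin n) F, (∀ X, T X = P * X * Q) ∨ ∀ X, T X = P * Xᵀ * Q := by
  have : Nonempty (Fin n) := ⟨⟨0, by omega⟩⟩
  have hinj := traceAdjoint_injective hT.2
  have hunit (A : Matrix (Fin n) (Fin n) F) (hA : IsInvolutionMulUnipotent (toLin' A)) :
      IsUnit (T A) :=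
    isUnit_of_mem_prodInv3 (h A (mem_prodInv3_of_isInvolutionMulUnipotent h2 hA))
  obtain ⟨P, Q, hPQ | hPQ⟩ := exists_eq_mul_mul_or_of_forall_isRankOneSpace hinj fun v hv =>
    isRankOneSpace_of_not_hasTraceOrthogonal h2 (by simpa using hn)
      (finrank_leftFactorImage hinj hv)
      (not_hasTraceOrthogonal_leftFactorImage_traceAdjoint hunit hv)
  · exact ⟨Q, P, .inl (eq_mul_mul_of_traceAdjoint_eq hPQ)⟩
  · exact ⟨Pᵀ, Qᵀ, .inr (eq_mul_transpose_mul_of_traceAdjoint_eq hPQ)⟩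

section FinTwo

variable {F : Type*} [Field F]

theorem companion_mem_prodInv3 {δ : F} (hδ : δ * δ = 1) (τ : F) :
    !![0, -δ; 1, τ] ∈ ProdInv3 F 2 := by
  refine ⟨!![0, 1; 1, 0], !![1, τ * δ; 0, -1], !![1, 0; 0, δ], ?_, ?_, ?_, ?_⟩
  · simp [one_fin_two]
  · simp [one_fin_two]
  · simp [one_fin_two, hδ]
  · simp [mul_assoc, hδ]

theorem diagonal_mem_prodInv3 {a d : F} (had : a * d * (a * d) = 1) :
    !![a, 0; 0, d] ∈ ProdInv3 F 2 := by
  have hone : a * (a * d * d) = 1 := by rw [← had]; ring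
  refine ⟨!![0, a; a * d * d, 0], !![0, 1; 1, 0], !![1, 0; 0, a * d], ?_, ?_, ?_, ?_⟩
  · simp [one_fin_two, hone, mul_comm _ a]
  · simp [one_fin_two]
  · simp [one_fin_two, had]
  · have hd : a * d * d * (a * d) = d := by linear_combination d * had
    simp [hd]

theorem mem_prodInv3_of_apply_one_zero_ne_zero {A : Matrix (Fin 2) (Fin 2) F} (hc : A 1 0 ≠ 0)
    (hA : A.det * A.det = 1) : A ∈ ProdInv3 F 2 := by
  -- In the basis `e₀, A e₀` the matrix `A` becomes the companion matrix of its characteristic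
  -- polynomial.
  obtain ⟨u, hu⟩ : IsUnit !![1, A 0 0; 0, A 1 0] := by
    simpa [isUnit_iff_isUnit_det, det_fin_two] using hc
  have hconj : A = u.val * !![0, -A.det; 1, A.trace] * u⁻¹.val := by
    rw [Units.eq_mul_inv_iff_mul_eq, hu]
    ext i j
    fin_cases i <;> fin_cases j <;> simp [mul_apply, det_fin_two, trace_fin_two] <;> ring
  rw [hconj]
  exact conj_mem_prodInv3 (companion_mem_prodInv3 hA _) u

theorem mem_prodInv3_fin_two {A : Matrix (Fin 2) (Fin 2) F} (hA : A.det * A.det = 1) :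
    A ∈ ProdInv3 F 2 := by
  by_cases hc : A 1 0 = 0
  · by_cases hb : A 0 1 = 0
    · rw [det_fin_two, hb, zero_mul, sub_zero] at hA
      rw [eta_fin_two A, hb, hc]
      exact diagonal_mem_prodInv3 hA
    · rw [← transpose_transpose A]
      exact transpose_mem_prodInv3
        (mem_prodInv3_of_apply_one_zero_ne_zero hb (by rwa [det_transpose]))
  · exact mem_prodInv3_of_apply_one_zero_ne_zero hc hA

theorem exists_forall_det_add_smul_eq_one {N : Matrix (Fin 2) (Fin 2) F} (hN : N.det = 0) :
    ∃ J : Matrix (Fin 2) (Fin 2) F, ∀ t : F, (J + t • N).det = 1 := by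
  suffices ∃ a b c d : F, a * d - b * c = 1 ∧
      a * N 1 1 + d * N 0 0 - b * N 1 0 - c * N 0 1 = 0 by
    obtain ⟨a, b, c, d, hdet, hcross⟩ := this
    refine ⟨!![a, b; c, d], fun t => ?_⟩
    rw [det_fin_two] at hN ⊢
    simp only [Matrix.add_apply, Matrix.smul_apply, smul_eq_mul, of_apply, cons_val', cons_val_zero,
      cons_val_one, cons_val_fin_one]
    linear_combination hdet + t * hcross + t ^ 2 * hN
  by_cases h₁ : N 1 1 = 0
  · by_cases h₀ : N 0 0 = 0
    · exact ⟨1, 0, 0, 1, by simp, by simp [h₀, h₁]⟩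
    · exact ⟨0, 1, -1, (N 1 0 - N 0 1) / N 0 0, by simp, by field_simp; ring⟩
  · exact ⟨(N 1 0 - N 0 1) / N 1 1, 1, -1, 0, by simp, by field_simp; ring⟩

theorem exists_det_add_smul_eq (M N : Matrix (Fin 2) (Fin 2) F) :
    ∃ q : F, ∀ t : F, (M + t • N).det = M.det + t * q + t ^ 2 * N.det := by
  refine ⟨M 0 0 * N 1 1 + M 1 1 * N 0 0 - M 0 1 * N 1 0 - M 1 0 * N 0 1, fun t => ?_⟩
  simp only [det_fin_two, Matrix.add_apply, Matrix.smul_apply, smul_eq_mul]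
  ring

theorem leadingCoeff_eq_zero_of_forall_mul_self_eq_one (h2 : (2 : F) ≠ 0) {a p q r : F}
    (h0 : a ≠ 0) (h1 : a ≠ 1) (hn1 : a ≠ -1)
    (h : ∀ t, (p + t * q + t ^ 2 * r) * (p + t * q + t ^ 2 * r) = 1) : r = 0 := by
  have hprod : 2 * (a ^ 2 * ((a - 1) * (a + 1))) * r ^ 2 = 0 := by
    linear_combination h a + h (-a) - a ^ 2 * (h 1 + h (-1)) - 2 * (1 - a ^ 2) * h 0
  have hne : 2 * (a ^ 2 * ((a - 1) * (a + 1))) ≠ 0 :=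
    mul_ne_zero h2 (mul_ne_zero (pow_ne_zero _ h0)
      (mul_ne_zero (sub_ne_zero.2 h1) fun h => hn1 (eq_neg_of_add_eq_zero_left h)))
  exact pow_eq_zero_iff two_ne_zero |>.1 ((mul_eq_zero.1 hprod).resolve_left hne)

variable {T : Matrix (Fin 2) (Fin 2) F →ₗ[F] Matrix (Fin 2) (Fin 2) F}
  {N : Matrix (Fin 2) (Fin 2) F}

theorem det_apply_eq_zero_of_exists_ne (h2 : (2 : F) ≠ 0) {a : F} (h0 : a ≠ 0) (h1 : a ≠ 1)
    (hn1 : a ≠ -1) (h : ∀ A ∈ ProdInv3 F 2, T A ∈ ProdInv3 F 2) (hN : N.det = 0) :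
    (T N).det = 0 := by
  obtain ⟨J, hJ⟩ := exists_forall_det_add_smul_eq_one hN
  obtain ⟨q, hq⟩ := exists_det_add_smul_eq (T J) (T N)
  refine leadingCoeff_eq_zero_of_forall_mul_self_eq_one (p := (T J).det) (q := q) h2 h0 h1 hn1
    fun t => ?_
  rw [← hq, ← map_smul, ← map_add]
  exact det_mul_det_of_mem_prodInv3 (h _ (mem_prodInv3_fin_two (by rw [hJ, one_mul])))

theorem det_apply_eq_zero_of_forall_eq (hF : ∀ a : F, a = 0 ∨ a = 1 ∨ a = -1)
    (hT : Function.Injective T) (h : ∀ A ∈ ProdInv3 F 2, T A ∈ ProdInv3 F 2) (hN : N.det = 0) :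
    (T N).det = 0 := by
  have : Finite F := Set.finite_univ_iff.1 <|
    (Set.toFinite {0, 1, -1}).subset fun a _ => by simpa using hF a
  have hsurj : Set.SurjOn T (ProdInv3 F 2) (ProdInv3 F 2) :=
    ((Set.toFinite _).injOn_iff_bijOn_of_mapsTo h |>.1 hT.injOn).surjOn
  by_contra hdet
  have hmem : T N ∈ ProdInv3 F 2 := mem_prodInv3_fin_two <| by
    rcases (hF (T N).det).resolve_left hdet with h | h <;> rw [h] <;> ring
  obtain ⟨A, hA, hAN⟩ := hsurj hmem
  simpa [hT hAN, hN] using det_mul_det_of_mem_prodInv3 hA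

theorem det_apply_eq_zero (h2 : (2 : F) ≠ 0) (hT : Function.Injective T)
    (h : ∀ A ∈ ProdInv3 F 2, T A ∈ ProdInv3 F 2) (hN : N.det = 0) : (T N).det = 0 := by
  by_cases hF : ∀ a : F, a = 0 ∨ a = 1 ∨ a = -1
  · exact det_apply_eq_zero_of_forall_eq hF hT h hN
  · push Not at hF
    obtain ⟨a, h0, h1, hn1⟩ := hF
    exact det_apply_eq_zero_of_exists_ne h2 h0 h1 hn1 h hN

theorem exists_eq_mul_mul_or_of_fin_two (h2 : (2 : F) ≠ 0) (hT : Function.Injective T)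
    (h : ∀ A ∈ ProdInv3 F 2, T A ∈ ProdInv3 F 2) :
    ∃ P Q : Matrix (Fin 2) (Fin 2) F, (∀ X, T X = P * X * Q) ∨ ∀ X, T X = P * Xᵀ * Q := by
  refine exists_eq_mul_mul_or_of_forall_isRankOneSpace hT fun v hv =>
    isRankOneSpace_of_forall_ker_ne_bot h2 (by simp)
      ((finrank_leftFactorImage hT hv).trans (by simp)) ?_
  rintro - ⟨g, rfl⟩
  have hdet : (T (vecMulVec v g)).det = 0 := det_apply_eq_zero h2 hT h (det_vecMulVec v g)
  exact (LinearMap.bot_lt_ker_of_det_eq_zero ((LinearMap.det_toLin' _).trans hdet)).ne'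

end FinTwo

theorem exists_eq_mul_mul_or_of_forall_mem_prodInv3 {F : Type*} [Field F] (h2 : (2 : F) ≠ 0) {n : ℕ}
    (hn : 2 ≤ n) {T : Matrix (Fin n) (Fin n) F →ₗ[F] Matrix (Fin n) (Fin n) F}
    (hT : Function.Bijective T) (h : ∀ A ∈ ProdInv3 F n, T A ∈ ProdInv3 F n) :
    ∃ P Q : Matrix (Fin n) (Fin n) F, (∀ X, T X = P * X * Q) ∨ ∀ X, T X = P * Xᵀ * Q := by
  obtain rfl | hn := hn.eq_or_lt
  · exact exists_eq_mul_mul_or_of_fin_two h2 hT.1 h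
  · exact exists_eq_mul_mul_or_of_three_le h2 hn hT h

theorem isUnit_and_isUnit_of_mul_mul_eq_one {M : Type*} [Monoid M] [IsDedekindFiniteMonoid M]
    {a b c : M} (h : a * b * c = 1) : IsUnit a ∧ IsUnit c :=
  ⟨IsUnit.of_mul_eq_one (b * c) (by rw [← mul_assoc, h]), IsUnit.of_mul_eq_one_right _ h⟩

theorem stmt13 (F : Type*) [Field F] (hchar : ringChar F ≠ 2) (n : ℕ) (hn : 2 ≤ n)
    (T : Matrix (Fin n) (Fin n) F →ₗ[F] Matrix (Fin n) (Fin n) F)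
    (hT : Function.Bijective T) :
    (∀ A ∈ ProdInv3 F n, T A ∈ ProdInv3 F n) ↔
      ∃ P Q : Matrix (Fin n) (Fin n) F, IsUnit P ∧ IsUnit Q ∧ P * Q ∈ LambdaSet F n ∧
        ((∀ X, T X = P * X * Q) ∨ (∀ X, T X = P * Xᵀ * Q)) := by
  constructor
  · intro h
    obtain ⟨P, Q, hPQ⟩ :=
      exists_eq_mul_mul_or_of_forall_mem_prodInv3 (Ring.two_ne_zero hchar) hn hT h
    obtain ⟨hP, u, rfl⟩ : IsUnit P ∧ IsUnit Q := by
      obtain ⟨X, hX⟩ := hT.2 1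
      rcases hPQ with hPQ | hPQ <;>
        exact isUnit_and_isUnit_of_mul_mul_eq_one ((hPQ X).symm.trans hX)
    refine ⟨P, u, hP, u.isUnit, (mul_mem_lambdaSet_iff P u).2 fun A hA => ?_, hPQ⟩
    rcases hPQ with hPQ | hPQ
    · exact hPQ A ▸ h A hA
    · simpa only [hPQ, transpose_transpose] using h _ (transpose_mem_prodInv3 hA)
  · rintro ⟨P, _, -, ⟨u, rfl⟩, hΛ, hPQ⟩ A hA
    have hmap := (mul_mem_lambdaSet_iff P u).1 hΛ
    rcases hPQ with hPQ | hPQ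
    · exact hPQ A ▸ hmap A hA
    · exact hPQ A ▸ hmap _ (transpose_mem_prodInv3 hA)
end

section
/- Let F be a field with char(F) ≠ 2 such that C_3 is a proper subset of D_3, and let T : M_3(F) → M_3(F) be a bijective linear map. Then T(C_3) ⊆ C_3 if and only if there exist a scalar α ∈ {−1, 1} and an invertible matrix P ∈ M_3(F) such that either T(X) = α·P·X·P⁻¹ for all X ∈ M_3(F), or T(X) = α·P·Xᵗ·P⁻¹ for all X ∈ M_3(F). -/
open Matrix

/-- The set of matrices that are products of four involutions. -/
def ProdInv4 (F : Type*) [Field F] (n : ℕ) : Set (Matrix (Fin n) (Fin n) F) :=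
  {A | ∃ J₁ J₂ J₃ J₄ : Matrix (Fin n) (Fin n) F,
    J₁ * J₁ = 1 ∧ J₂ * J₂ = 1 ∧ J₃ * J₃ = 1 ∧ J₄ * J₄ = 1 ∧ A = J₁ * J₂ * J₃ * J₄}

/-!
A `3 × 3` matrix with determinant `±1` that is not scalar is a product of three involutions: it is
similar to a matrix with first column `e₂`, and multiplying that by a suitable involution gives a
cyclic matrix with the same characteristic polynomial as its inverse, which is a product of two
involutions. Hence `C₃ ≠ D₃` only through scalar matrices, and this provides a primitive cube root
of unity `w` in `F`.

If `T` preserves `C₃`, then it preserves the condition `det X ^ 2 = 1`. When that condition holds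
along a whole line `X + t Y` with `Y` a dyad, evaluating `det (T X + t T Y) ^ 2 = 1` at `0`, `±1`,
`±w` and `±w²` kills the `t²` coefficient `tr (T X · adj (T Y))` of the determinant. Such `X` span
all matrices, so `adj (T Y) = 0`: `T` maps dyads to dyads. A bijective linear map with this property
is `X ↦ U X N` or `X ↦ U Xᵀ N`. In either case `X ↦ X (N U)` preserves `C₃`, and `N U` has to be a
scalar, as otherwise `w (N U)⁻¹` would lie in `C₃` and be sent to `w I`, which does not.
-/

section Conjugation

variable {R : Type*} [CommRing R] {n : Type*} [Fintype n] [DecidableEq n]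

theorem conj_mul_conj {P : Matrix n n R} (hP : IsUnit P)
    (A B : Matrix n n R) :
    P * A * P⁻¹ * (P * B * P⁻¹) = P * (A * B) * P⁻¹ := by
  have hP' : P⁻¹ * P = 1 := nonsing_inv_mul P ((isUnit_iff_isUnit_det P).1 hP)
  simp only [Matrix.mul_assoc, ← Matrix.mul_assoc P⁻¹ P, hP', Matrix.one_mul]

theorem conj_mul_conj_eq_one {P J : Matrix n n R} (hP : IsUnit P) (hJ : J * J = 1) :
    P * J * P⁻¹ * (P * J * P⁻¹) = 1 := by
  rw [conj_mul_conj hP, hJ, Matrix.mul_one, mul_nonsing_inv P ((isUnit_iff_isUnit_det P).1 hP)]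

theorem det_sq_of_mul_self_eq_one {J : Matrix n n R} (hJ : J * J = 1) :
    J.det ^ 2 = 1 := by
  rw [sq, ← det_mul, hJ, det_one]

end Conjugation

section InvolutionProducts

variable {F : Type*} [Field F] {n : ℕ}

/-- The set of matrices that are products of two involutions. -/
def ProdInv2 (F : Type*) [Field F] (n : ℕ) : Set (Matrix (Fin n) (Fin n) F) :=
  {A | ∃ J₁ J₂ : Matrix (Fin n) (Fin n) F, J₁ * J₁ = 1 ∧ J₂ * J₂ = 1 ∧ A = J₁ * J₂}

theorem ProdInv2.conj {A P : Matrix (Fin n) (Fin n) F} (hA : A ∈ ProdInv2 F n) (hP : IsUnit P) :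
    P * A * P⁻¹ ∈ ProdInv2 F n := by
  obtain ⟨J₁, J₂, h₁, h₂, rfl⟩ := hA
  exact ⟨_, _, conj_mul_conj_eq_one hP h₁, conj_mul_conj_eq_one hP h₂, (conj_mul_conj hP _ _).symm⟩

theorem ProdInv2.mul_mem_prodInv3 {A J : Matrix (Fin n) (Fin n) F} (hA : A ∈ ProdInv2 F n)
    (hJ : J * J = 1) : A * J ∈ ProdInv3 F n := by
  obtain ⟨J₁, J₂, h₁, h₂, rfl⟩ := hA
  exact ⟨J₁, J₂, J, h₁, h₂, hJ, rfl⟩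

namespace ProdInv3

theorem conj {A P : Matrix (Fin n) (Fin n) F} (hA : A ∈ ProdInv3 F n) (hP : IsUnit P) :
    P * A * P⁻¹ ∈ ProdInv3 F n := by
  obtain ⟨J₁, J₂, J₃, h₁, h₂, h₃, rfl⟩ := hA
  refine ⟨_, _, _, conj_mul_conj_eq_one hP h₁, conj_mul_conj_eq_one hP h₂,
    conj_mul_conj_eq_one hP h₃, ?_⟩
  rw [conj_mul_conj hP, conj_mul_conj hP]

theorem transpose {A : Matrix (Fin n) (Fin n) F} (hA : A ∈ ProdInv3 F n) :
    Aᵀ ∈ ProdInv3 F n := by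
  obtain ⟨J₁, J₂, J₃, h₁, h₂, h₃, rfl⟩ := hA
  refine ⟨J₃ᵀ, J₂ᵀ, J₁ᵀ, ?_, ?_, ?_, ?_⟩
  · rw [← transpose_mul, h₃, transpose_one]
  · rw [← transpose_mul, h₂, transpose_one]
  · rw [← transpose_mul, h₁, transpose_one]
  · rw [transpose_mul, transpose_mul, Matrix.mul_assoc]

theorem smul {A : Matrix (Fin n) (Fin n) F} {c : F} (hc : c ^ 2 = 1) (hA : A ∈ ProdInv3 F n) :
    c • A ∈ ProdInv3 F n := by
  obtain ⟨J₁, J₂, J₃, h₁, h₂, h₃, rfl⟩ := hA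
  refine ⟨c • J₁, J₂, J₃, ?_, h₂, h₃, by simp only [smul_mul]⟩
  rw [Matrix.smul_mul, Matrix.mul_smul, smul_smul, h₁, ← sq, hc, one_smul]

theorem one_mem : (1 : Matrix (Fin n) (Fin n) F) ∈ ProdInv3 F n :=
  ⟨1, 1, 1, Matrix.mul_one 1, Matrix.mul_one 1, Matrix.mul_one 1, by simp only [Matrix.mul_one]⟩

theorem det_sq {A : Matrix (Fin n) (Fin n) F} (hA : A ∈ ProdInv3 F n) : A.det ^ 2 = 1 := by
  obtain ⟨J₁, J₂, J₃, h₁, h₂, h₃, rfl⟩ := hA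
  simp only [det_mul, mul_pow, det_sq_of_mul_self_eq_one, h₁, h₂, h₃, mul_one]

end ProdInv3

theorem ProdInv4.det_sq {A : Matrix (Fin n) (Fin n) F} (hA : A ∈ ProdInv4 F n) :
    A.det ^ 2 = 1 := by
  obtain ⟨J₁, J₂, J₃, J₄, h₁, h₂, h₃, h₄, rfl⟩ := hA
  simp only [det_mul, mul_pow, det_sq_of_mul_self_eq_one, h₁, h₂, h₃, h₄, mul_one]

end InvolutionProducts

section ThreeByThree

variable {R : Type*} [CommRing R] {n : ℕ}

theorem adjugate_fin_three_eq_mul_self_sub (A : Matrix (Fin 3) (Fin 3) R) :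
    A.adjugate = A * A - A.trace • A + A.adjugate.trace • 1 := by
  rw [adjugate_fin_three]
  ext i j
  fin_cases i <;> fin_cases j <;>
    simp [mul_apply, Fin.sum_univ_three, trace_fin_three] <;> ring

theorem pow_three_fin_three (A : Matrix (Fin 3) (Fin 3) R) :
    A ^ 3 = A.trace • A ^ 2 - A.adjugate.trace • A + A.det • 1 := by
  have h := congrArg (· * A) (adjugate_fin_three_eq_mul_self_sub A)
  simp only [adjugate_mul, Matrix.add_mul, Matrix.sub_mul, Matrix.smul_mul, Matrix.one_mul] at h
  rw [h, sq, pow_succ, sq]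
  abel

/-- The Krylov matrix of `B` at `v`, with columns `v`, `B v`, `B² v`, …; it is invertible exactly
when `v` is a cyclic vector of `B`. -/
def krylov (B : Matrix (Fin n) (Fin n) R) (v : Fin n → R) : Matrix (Fin n) (Fin n) R :=
  Matrix.of fun i j => (B ^ (j : ℕ) *ᵥ v) i

theorem mul_krylov_apply (B : Matrix (Fin n) (Fin n) R) (v : Fin n → R) (i j : Fin n) :
    (B * krylov B v) i j = (B ^ (j + 1 : ℕ) *ᵥ v) i := by
  rw [pow_succ', ← mulVec_mulVec]
  rfl

theorem mul_krylov_fin_three {B : Matrix (Fin 3) (Fin 3) R}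
    (hB : B.adjugate.trace = B.det * B.trace) (v : Fin 3 → R) :
    B * krylov B v =
      krylov B v * !![0, 0, B.det; 1, 0, -(B.det * B.trace); 0, 1, B.trace] := by
  ext i j
  rw [mul_krylov_apply]
  fin_cases j
  · simp [krylov, mul_apply, Fin.sum_univ_three]
  · simp [krylov, mul_apply, Fin.sum_univ_three]
  · have h := congrFun (congrArg (· *ᵥ v) (pow_three_fin_three B)) i
    simp only [add_mulVec, sub_mulVec, smul_mulVec, one_mulVec, Pi.add_apply, Pi.sub_apply,
      Pi.smul_apply, smul_eq_mul, hB] at h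
    simp only [krylov, mul_apply, Fin.sum_univ_three, of_apply]
    simp only [h, Fin.reduceFinMk, Fin.coe_ofNat_eq_mod, Nat.zero_mod, Nat.one_mod, Nat.mod_succ,
      Nat.reduceAdd, pow_zero, pow_one, one_mulVec, cons_val', cons_val, cons_val_zero,
      cons_val_one, cons_val_fin_one, mul_neg]
    ring

theorem det_hessenberg (a p q r s w z : R) :
    !![0, p, q; a, r, s; 0, w, z].det = a * (q * w - p * z) := by
  simp only [det_fin_three, of_apply, cons_val', cons_val_zero, cons_val_one, cons_val]
  ring

end ThreeByThree

section NonScalar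

variable {F : Type*} [Field F]

theorem companion_mem_prodInv2 {d : F} (hd : d ^ 2 = 1) (t : F) :
    !![0, 0, d; 1, 0, -(d * t); 0, 1, t] ∈ ProdInv2 F 3 := by
  have hd' : d * d = 1 := by rw [← sq, hd]
  refine ⟨!![0, 0, 1; 0, 1, 0; 1, 0, 0], !![0, 1, t; 1, 0, -(d * t); 0, 0, d], ?_, ?_, ?_⟩
  · simp [one_fin_three]
  · simp [one_fin_three, hd', mul_right_comm d t d, mul_comm t d]
  · simp

-- Since `det B = ±1`, the hypothesis `hB` says that `B` and `B⁻¹` have the same trace, and hence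
-- the same characteristic polynomial.
theorem mem_prodInv2_of_isUnit_krylov {B : Matrix (Fin 3) (Fin 3) F} (hdet : B.det ^ 2 = 1)
    (hB : B.adjugate.trace = B.det * B.trace) {v : Fin 3 → F} (hv : IsUnit (krylov B v)) :
    B ∈ ProdInv2 F 3 := by
  have hconj : B = krylov B v * !![0, 0, B.det; 1, 0, -(B.det * B.trace); 0, 1, B.trace] *
      (krylov B v)⁻¹ := by
    rw [← mul_krylov_fin_three hB v,
      mul_nonsing_inv_cancel_right _ _ ((isUnit_iff_isUnit_det _).1 hv)]
  rw [hconj]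
  exact ProdInv2.conj (companion_mem_prodInv2 hdet B.trace) hv

theorem mem_prodInv2_of_hessenberg {p q m n w z : F} (hdet : (p * z - q * w) ^ 2 = 1)
    (htr : p + m * z - w * n = (p * z - q * w) * (m + z)) {v : Fin 3 → F}
    (hv : (krylov !![0, p, q; -1, m, n; 0, w, z] v).det ≠ 0) :
    !![0, p, q; -1, m, n; 0, w, z] ∈ ProdInv2 F 3 := by
  refine mem_prodInv2_of_isUnit_krylov ?_ ?_ ((isUnit_iff_isUnit_det _).2 hv.isUnit)
  · rw [det_hessenberg]
    linear_combination hdet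
  · rw [det_hessenberg, adjugate_fin_three, trace_fin_three, trace_fin_three]
    simp only [of_apply, cons_val', cons_val_zero, cons_val_one, cons_val]
    linear_combination htr

theorem exists_hessenberg_mem_prodInv2 {p q w z : F} (hdet : (p * z - q * w) ^ 2 = 1) :
    ∃ m n, !![0, p, q; -1, m, n; 0, w, z] ∈ ProdInv2 F 3 := by
  rcases eq_or_ne w 0 with rfl | hw
  · have hpz : p * z ≠ 0 := by intro h; simp [h] at hdet
    have hp : p ≠ 0 := left_ne_zero_of_mul hpz
    have hz : z ≠ 0 := right_ne_zero_of_mul hpz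
    obtain ⟨n, hn⟩ : ∃ n, q ^ 2 - (z⁻¹ + p * z) * q * n + p * n ^ 2 ≠ 0 := by
      rcases eq_or_ne q 0 with rfl | hq
      · exact ⟨1, by simpa using hp⟩
      · exact ⟨0, by simpa using hq⟩
    refine ⟨z⁻¹ + p * z, n, mem_prodInv2_of_hessenberg (v := ![0, 0, 1]) hdet ?_ ?_⟩
    · field_simp
      linear_combination -z * hdet
    · have hkrylov : (krylov !![0, p, q; -1, z⁻¹ + p * z, n; 0, 0, z] ![0, 0, 1]).det =
          -(q ^ 2 - (z⁻¹ + p * z) * q * n + p * n ^ 2) := by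
        simp only [krylov, mulVec, dotProduct, Fin.sum_univ_three, cons_val_zero, mul_zero,
          cons_val_one, add_zero, cons_val, mul_one, zero_add, det_fin_three, of_apply,
          Fin.coe_ofNat_eq_mod, Nat.zero_mod, pow_zero, ne_eq, Fin.reduceEq, not_false_eq_true,
          one_apply_ne, one_apply_eq, Nat.one_mod, pow_one, cons_val', cons_val_fin_one, zero_mul,
          Nat.mod_succ, sq, mul_apply]
        ring
      rwa [hkrylov, neg_ne_zero]
  · refine ⟨0, (p - (p * z - q * w) * z) / w,
      mem_prodInv2_of_hessenberg (v := ![1, 0, 0]) hdet ?_ ?_⟩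
    · field_simp
      ring
    · simpa [krylov, det_fin_three, sq, mulVec, dotProduct, mul_apply, Fin.sum_univ_three] using hw

theorem hessenberg_mem_prodInv3 {p q r s w z : F}
    (hdet : !![0, p, q; 1, r, s; 0, w, z].det ^ 2 = 1) :
    !![0, p, q; 1, r, s; 0, w, z] ∈ ProdInv3 F 3 := by
  rw [det_hessenberg, one_mul, ← neg_sub (p * z), neg_sq] at hdet
  obtain ⟨m, n, hmn⟩ := exists_hessenberg_mem_prodInv2 hdet
  -- Right multiplication by `J` negates the first column and changes the middle row at will.
  let J : Matrix (Fin 3) (Fin 3) F := !![-1, m - r, n - s; 0, 1, 0; 0, 0, 1]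
  have hJ : J * J = 1 := by simp [J, one_fin_three]
  convert ProdInv2.mul_mem_prodInv3 hmn hJ using 1
  simp [J]

theorem exists_linearIndependent_mulVec {n : Type*} [Fintype n] [DecidableEq n] {A : Matrix n n F}
    (hA : ∀ c : F, A ≠ c • 1) : ∃ u, LinearIndependent F ![u, A *ᵥ u] := by
  by_contra! h
  obtain ⟨c, hc⟩ := LinearMap.exists_eq_smul_id_of_forall_notLinearIndependent (f := A.mulVecLin) h
  exact hA c (mulVec_injective (funext fun v => by
    simpa [smul_mulVec] using LinearMap.congr_fun hc v))

theorem exists_conj_hessenberg {A : Matrix (Fin 3) (Fin 3) F} (hA : ∀ c : F, A ≠ c • 1) :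
    ∃ (Q : Matrix (Fin 3) (Fin 3) F) (p q r s w z : F), IsUnit Q ∧
      A = Q * !![0, p, q; 1, r, s; 0, w, z] * Q⁻¹ := by
  obtain ⟨u, hu⟩ := exists_linearIndependent_mulVec hA
  obtain ⟨v, hv⟩ := exists_linearIndependent_snoc_of_lt_finrank hu (by simp)
  let Q : Matrix (Fin 3) (Fin 3) F := (Matrix.of (Fin.snoc ![u, A *ᵥ u] v))ᵀ
  have hQ : IsUnit Q := linearIndependent_cols_iff_isUnit.1 hv
  have hQd := (isUnit_iff_isUnit_det Q).1 hQ
  let M := Q⁻¹ * A * Q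
  have hcol : M.col 0 = Pi.single 1 1 := by
    calc M.col 0 = Q⁻¹ *ᵥ A *ᵥ Q.col 0 := by
          simp only [M, ← mulVec_single_one, mulVec_mulVec, Matrix.mul_assoc]
      _ = Q⁻¹ *ᵥ Q.col 1 := rfl
      _ = Pi.single 1 1 := by
          rw [← mulVec_single_one, mulVec_mulVec, nonsing_inv_mul Q hQd, one_mulVec]
  have hM : M = !![0, M 0 1, M 0 2; 1, M 1 1, M 1 2; 0, M 2 1, M 2 2] := by
    conv_lhs => rw [eta_fin_three M, ← col_apply M 0 0, ← col_apply M 0 1, ← col_apply M 0 2, hcol]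
    simp
  refine ⟨Q, M 0 1, M 0 2, M 1 1, M 1 2, M 2 1, M 2 2, hQ, ?_⟩
  rw [← hM, ← Matrix.mul_assoc, mul_nonsing_inv_cancel_left Q A hQd,
    mul_nonsing_inv_cancel_right Q A hQd]

theorem mem_prodInv3_of_not_scalar {A : Matrix (Fin 3) (Fin 3) F} (hdet : A.det ^ 2 = 1)
    (hA : ∀ c : F, A ≠ c • 1) : A ∈ ProdInv3 F 3 := by
  obtain ⟨Q, p, q, r, s, w, z, hQ, rfl⟩ := exists_conj_hessenberg hA
  rw [det_conj hQ] at hdet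
  exact ProdInv3.conj (hessenberg_mem_prodInv3 hdet) hQ

end NonScalar

section Scalars

variable {F : Type*} [Field F]

theorem trace_ne_zero_of_mul_self_eq_one (h3 : (3 : F) ≠ 0) {J : Matrix (Fin 3) (Fin 3) F}
    (hJ : J * J = 1) : J.trace ≠ 0 := by
  intro ht
  have hadj : J.adjugate = J.det • J := by
    calc J.adjugate = J.adjugate * J * J := by rw [Matrix.mul_assoc, hJ, Matrix.mul_one]
      _ = J.det • J := by rw [adjugate_mul, Matrix.smul_mul, Matrix.one_mul]
  have h : J.det • J = 1 := by
    simpa only [hadj, hJ, trace_smul, ht, smul_zero, zero_smul, sub_zero, add_zero]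
      using adjugate_fin_three_eq_mul_self_sub J
  apply h3
  simpa [ht] using (congrArg Matrix.trace h).symm

theorem sq_eq_one_of_smul_one_mem_prodInv3 (h3 : (3 : F) ≠ 0) {c : F}
    (hc : c • (1 : Matrix (Fin 3) (Fin 3) F) ∈ ProdInv3 F 3) : c ^ 2 = 1 := by
  obtain ⟨J₁, J₂, J₃, h₁, h₂, h₃, h⟩ := hc
  have h12 : c • J₃ = J₁ * J₂ := by
    calc c • J₃ = c • 1 * J₃ := by rw [Matrix.smul_mul, Matrix.one_mul]
      _ = J₁ * J₂ := by rw [h, Matrix.mul_assoc, h₃, Matrix.mul_one]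
  have h21 : c • (J₂ * J₁) = J₃ := by
    calc c • (J₂ * J₁) = J₂ * J₁ * c • 1 := by rw [Matrix.mul_smul, Matrix.mul_one]
      _ = J₂ * (J₁ * J₁) * J₂ * J₃ := by simp only [h, Matrix.mul_assoc]
      _ = J₃ := by rw [h₁, Matrix.mul_one, h₂, Matrix.one_mul]
  have htr : c ^ 2 * J₃.trace = J₃.trace := by
    calc c ^ 2 * J₃.trace = c * (c • J₃).trace := by rw [trace_smul, smul_eq_mul]; ring
      _ = (c • (J₂ * J₁)).trace := by rw [h12, trace_mul_comm, trace_smul, smul_eq_mul]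
      _ = J₃.trace := by rw [h21]
  exact (mul_eq_right₀ (trace_ne_zero_of_mul_self_eq_one h3 h₃)).1 htr

theorem exists_isPrimitiveRoot_three (h : ProdInv3 F 3 ⊂ ProdInv4 F 3) :
    ∃ w : F, IsPrimitiveRoot w 3 := by
  obtain ⟨A, hA4, hA3⟩ := Set.exists_of_ssubset h
  have hdet : A.det ^ 2 = 1 := ProdInv4.det_sq hA4
  obtain ⟨c, rfl⟩ : ∃ c : F, A = c • 1 := by
    by_contra! hA
    exact hA3 (mem_prodInv3_of_not_scalar hdet hA)
  have hc : c ^ 2 ≠ 1 := fun hc => hA3 (ProdInv3.smul hc ProdInv3.one_mem)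
  have hc6 : (c ^ 2) ^ 3 = 1 := by
    rw [← hdet, det_smul, Fintype.card_fin, det_one]
    ring
  exact ⟨c ^ 2, IsPrimitiveRoot.iff_orderOf.2 (orderOf_eq_prime hc6 hc)⟩

theorem three_ne_zero_of_isPrimitiveRoot {w : F} (hw : IsPrimitiveRoot w 3) : (3 : F) ≠ 0 := by
  have := hw.neZero'
  exact_mod_cast NeZero.ne ((3 : ℕ) : F)

end Scalars

section DeterminantPreservers

variable {F : Type*} [Field F] {w : F}

theorem quadratic_coeff_eq_zero_of_sq_eq_one (hw : IsPrimitiveRoot w 3) {a b c d : F}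
    (h : ∀ t, (a + b * t + c * t ^ 2 + d * t ^ 3) ^ 2 = 1) : c = 0 := by
  have hw2 : w ^ 2 + w + 1 = 0 := by
    have := hw.geom_sum_eq_zero (by norm_num)
    simp only [Finset.sum_range_succ, Finset.sum_range_zero] at this
    linear_combination this
  have h3 : (3 : F) ≠ 0 := three_ne_zero_of_isPrimitiveRoot hw
  have heven (t : F) : a ^ 2 + (2 * a * c + b ^ 2) * t ^ 2 + (c ^ 2 + 2 * b * d) * t ^ 4 +
      d ^ 2 * t ^ 6 = 1 := by
    rcases eq_or_ne (2 : F) 0 with h2 | h2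
    · linear_combination h t - (a * b * t + (a * d + b * c) * t ^ 3 + c * d * t ^ 5) * h2
    · apply mul_left_cancel₀ h2
      linear_combination h t + h (-t)
  set p := 2 * a * c + b ^ 2
  set q := c ^ 2 + 2 * b * d with hq
  have hw3 : w ^ 3 = 1 := hw.pow_eq_one
  have h₁ : p + q + d ^ 2 = 0 := by linear_combination heven 1 - heven 0
  have h₂ : p * w ^ 2 + q * w + d ^ 2 = 0 := by
    linear_combination heven w - heven 0 - (q * w + d ^ 2 * (w ^ 3 + 1)) * hw3
  have h₃ : p * w + q * w ^ 2 + d ^ 2 = 0 := by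
    linear_combination heven (w ^ 2) - heven 0 -
      (p * w + q * w ^ 2 * (w ^ 3 + 1) + d ^ 2 * (w ^ 6 + 1) * (w ^ 3 + 1)) * hw3
  -- The discrete Fourier transform over `{1, w, w²}` isolates the coefficients of `t⁶` and `t⁴`.
  have hd : 3 * d ^ 2 = 0 := by linear_combination h₁ + h₂ + h₃ - (p + q) * hw2
  have hq0 : 3 * q = 0 := by
    linear_combination h₁ + w ^ 2 * h₂ + w * h₃ -
      (p * (w ^ 2 - w + 1) + 2 * q * (w - 1) + d ^ 2) * hw2
  obtain rfl : d = 0 := by simpa [h3] using hd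
  simpa [h3, hq] using hq0

theorem det_add_smul_fin_three {R : Type*} [CommRing R] (X Y : Matrix (Fin 3) (Fin 3) R) (t : R) :
    (X + t • Y).det = X.det + (X.adjugate * Y).trace * t + (X * Y.adjugate).trace * t ^ 2 +
      Y.det * t ^ 3 := by
  simp only [adjugate_fin_three, det_fin_three, trace_fin_three, Matrix.mul_apply,
    Fin.sum_univ_three]
  simp only [Matrix.add_apply, Matrix.smul_apply, smul_eq_mul, of_apply, cons_val', cons_val_zero,
    cons_val_fin_one, cons_val_one, cons_val]
  ring

theorem span_line_det_sq_eq_one :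
    Submodule.span F {X : Matrix (Fin 3) (Fin 3) F |
      ∀ t : F, (X + t • Matrix.single 0 0 1).det ^ 2 = 1} = ⊤ := by
  set S := {X : Matrix (Fin 3) (Fin 3) F | ∀ t : F, (X + t • Matrix.single 0 0 1).det ^ 2 = 1}
  have hU (x a b : F) : !![x, 1, a; 1, 0, b; 0, 0, 1] ∈ S := fun t => by
    simp [det_fin_three]
  have hL (a b : F) : !![0, 1, 0; 1, 0, 0; a, b, 1] ∈ S := fun t => by
    simp [det_fin_three]
  have hU' (a : F) : !![0, a, 1; 0, 1, 0; 1, 0, 0] ∈ S := fun t => by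
    simp [det_fin_three]
  have hL' (a : F) : !![0, 0, 1; a, 1, 0; 1, 0, 0] ∈ S := fun t => by
    simp [det_fin_three]
  rw [eq_top_iff]
  intro Y _
  have hY : Y = !![Y 0 0, 1, Y 0 2 - Y 1 1; 1, 0, Y 1 2; 0, 0, 1] +
      !![0, 1, 0; 1, 0, 0; Y 2 0 - Y 1 1, Y 2 1, 1] +
      !![0, Y 0 1 - Y 2 2, 1; 0, 1, 0; 1, 0, 0] + !![0, 0, 1; Y 1 0 - Y 2 2, 1, 0; 1, 0, 0] +
      (Y 1 1 - 2) • !![0, 0, 1; 0, 1, 0; 1, 0, 0] +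
      (Y 2 2 - 2) • !![0, 1, 0; 1, 0, 0; 0, 0, 1] := by
    ext i j
    fin_cases i <;> fin_cases j <;> simp <;> ring
  rw [hY]
  refine add_mem (add_mem (add_mem (add_mem (add_mem ?_ ?_) ?_) ?_)
    (Submodule.smul_mem _ _ ?_)) (Submodule.smul_mem _ _ ?_)
  exacts [Submodule.subset_span (hU _ _ _), Submodule.subset_span (hL _ _),
    Submodule.subset_span (hU' _), Submodule.subset_span (hL' _),
    Submodule.subset_span (hU' _), Submodule.subset_span (hL _ _)]

theorem trace_mul_adjugate_eq_zero_of_line (hw : IsPrimitiveRoot w 3)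
    {T : Matrix (Fin 3) (Fin 3) F →ₗ[F] Matrix (Fin 3) (Fin 3) F}
    (hT : ∀ X, X.det ^ 2 = 1 → (T X).det ^ 2 = 1) {X Y : Matrix (Fin 3) (Fin 3) F}
    (hX : ∀ t : F, (X + t • Y).det ^ 2 = 1) : (T X * (T Y).adjugate).trace = 0 := by
  refine quadratic_coeff_eq_zero_of_sq_eq_one hw
    (a := (T X).det) (b := ((T X).adjugate * T Y).trace) (d := (T Y).det) fun t => ?_
  rw [← det_add_smul_fin_three, ← map_smul, ← map_add]
  exact hT _ (hX t)

theorem adjugate_map_single_eq_zero (hw : IsPrimitiveRoot w 3)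
    {T : Matrix (Fin 3) (Fin 3) F →ₗ[F] Matrix (Fin 3) (Fin 3) F} (hsurj : Function.Surjective T)
    (hT : ∀ X, X.det ^ 2 = 1 → (T X).det ^ 2 = 1) :
    (T (Matrix.single 0 0 1)).adjugate = 0 := by
  let φ := traceLinearMap (Fin 3) F F ∘ₗ
    LinearMap.mulRight F (T (Matrix.single 0 0 1)).adjugate ∘ₗ T
  have hφ : φ = 0 := LinearMap.ext_on span_line_det_sq_eq_one fun X hX =>
    trace_mul_adjugate_eq_zero_of_line hw hT hX
  refine ext_iff_trace_mul_left.2 fun Y => ?_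
  obtain ⟨X, rfl⟩ := hsurj Y
  rw [Matrix.mul_zero, trace_zero]
  exact LinearMap.congr_fun hφ X

theorem exists_det_eq_one_col_zero_eq {x : Fin 3 → F} (hx : x ≠ 0) :
    ∃ P : Matrix (Fin 3) (Fin 3) F, P.det = 1 ∧ P.col 0 = x := by
  obtain ⟨i, hi⟩ := Function.ne_iff.1 hx
  fin_cases i <;> simp only [Fin.zero_eta, Fin.mk_one, Fin.reduceFinMk, Pi.zero_apply] at hi
  · refine ⟨!![x 0, 0, 0; x 1, (x 0)⁻¹, 0; x 2, 0, 1], by simp [det_fin_three, hi], ?_⟩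
    ext j; fin_cases j <;> rfl
  · refine ⟨!![x 0, 0, 1; x 1, 0, 0; x 2, (x 1)⁻¹, 0], by simp [det_fin_three, hi], ?_⟩
    ext j; fin_cases j <;> rfl
  · refine ⟨!![x 0, 1, 0; x 1, 0, (x 2)⁻¹; x 2, 0, 0], by simp [det_fin_three, hi], ?_⟩
    ext j; fin_cases j <;> rfl

theorem adjugate_map_vecMulVec_eq_zero (hw : IsPrimitiveRoot w 3)
    {T : Matrix (Fin 3) (Fin 3) F →ₗ[F] Matrix (Fin 3) (Fin 3) F} (hsurj : Function.Surjective T)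
    (hT : ∀ X, X.det ^ 2 = 1 → (T X).det ^ 2 = 1) (x y : Fin 3 → F) :
    (T (vecMulVec x y)).adjugate = 0 := by
  rcases eq_or_ne x 0 with rfl | hx
  · simp
  rcases eq_or_ne y 0 with rfl | hy
  · simp
  obtain ⟨P, hP, rfl⟩ := exists_det_eq_one_col_zero_eq hx
  obtain ⟨Q, hQ, rfl⟩ := exists_det_eq_one_col_zero_eq hy
  have hPu : IsUnit P := (isUnit_iff_isUnit_det P).2 (hP ▸ isUnit_one)
  have hQu : IsUnit Qᵀ := (isUnit_iff_isUnit_det Qᵀ).2 (by rw [det_transpose, hQ]; exact isUnit_one)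
  let S := T ∘ₗ LinearMap.mulRight F Qᵀ ∘ₗ LinearMap.mulLeft F P
  have hS : Function.Surjective S :=
    hsurj.comp ((IsUnit.isUnit_iff_mulRight_bijective.1 hQu).surjective.comp
      (IsUnit.isUnit_iff_mulLeft_bijective.1 hPu).surjective)
  have hSX (X) : S X = T (P * X * Qᵀ) := rfl
  have hSdet (X) (hX : X.det ^ 2 = 1) : (S X).det ^ 2 = 1 := by
    rw [hSX]
    exact hT _ (by rw [det_mul, det_mul, det_transpose, hP, hQ, one_mul, mul_one, hX])
  have hdyad : P * Matrix.single 0 0 1 * Qᵀ = vecMulVec (P.col 0) (Q.col 0) := by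
    rw [single_eq_single_vecMulVec_single, mul_vecMulVec, vecMulVec_mul, vecMul_transpose,
      mulVec_single_one, mulVec_single_one]
  rw [← hdyad, ← hSX]
  exact adjugate_map_single_eq_zero hw hS hSdet

end DeterminantPreservers

section Dyads

variable {F : Type*} [Field F] {m n : Type*}

/-- A dyad is a matrix of the form `a bᵀ`, that is, a matrix of rank at most one. -/
def IsDyad (M : Matrix m n F) : Prop := ∃ a b, M = vecMulVec a b

theorem IsDyad.transpose {M : Matrix m n F} (hM : IsDyad M) : IsDyad Mᵀ := by
  obtain ⟨a, b, rfl⟩ := hM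
  exact ⟨b, a, transpose_vecMulVec a b⟩

theorem isDyad_iff_minors {M : Matrix m n F} :
    IsDyad M ↔ ∀ i j k l, M i j * M k l = M i l * M k j := by
  constructor
  · rintro ⟨a, b, rfl⟩ i j k l
    simp only [vecMulVec_apply]
    ring
  · intro h
    rcases eq_or_ne M 0 with rfl | hM
    · exact ⟨0, 0, (zero_vecMulVec 0).symm⟩
    obtain ⟨i, hi⟩ := Function.ne_iff.1 hM
    obtain ⟨j, hij : M i j ≠ 0⟩ := Function.ne_iff.1 hi
    refine ⟨fun k => M k j, fun l => M i l / M i j, ?_⟩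
    ext k l
    rw [vecMulVec_apply, mul_div_assoc', eq_div_iff hij]
    exact h k l i j

theorem isDyad_of_adjugate_eq_zero {M : Matrix (Fin 3) (Fin 3) F} (hM : M.adjugate = 0) :
    IsDyad M := by
  rw [adjugate_fin_three, ← Matrix.ext_iff] at hM
  obtain ⟨h00, h01, h02⟩ : _ ∧ _ ∧ _ := ⟨hM 0 0, hM 0 1, hM 0 2⟩
  obtain ⟨h10, h11, h12⟩ : _ ∧ _ ∧ _ := ⟨hM 1 0, hM 1 1, hM 1 2⟩
  obtain ⟨h20, h21, h22⟩ : _ ∧ _ ∧ _ := ⟨hM 2 0, hM 2 1, hM 2 2⟩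
  simp only [of_apply, cons_val', cons_val_zero, cons_val_one, cons_val, Matrix.zero_apply]
    at h00 h01 h02 h10 h11 h12 h20 h21 h22
  clear hM
  rw [isDyad_iff_minors]
  intro i j k l
  fin_cases i <;> fin_cases j <;> fin_cases k <;> fin_cases l <;>
    simp only [Fin.zero_eta, Fin.mk_one, Fin.reduceFinMk] <;> grind

theorem mem_span_singleton_of_minors {a c : n → F} (hc : c ≠ 0) (h : ∀ i j, a i * c j = a j * c i) :
    a ∈ F ∙ c := by
  obtain ⟨j, hj : c j ≠ 0⟩ := Function.ne_iff.1 hc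
  refine Submodule.mem_span_singleton.2 ⟨a j / c j, funext fun i => ?_⟩
  rw [Pi.smul_apply, smul_eq_mul, div_mul_eq_mul_div, div_eq_iff hj, h i j]

theorem minors_of_isDyad_add {a c : m → F} {b d : n → F}
    (h : IsDyad (vecMulVec a b + vecMulVec c d)) :
    (∀ i k, a i * c k = a k * c i) ∨ ∀ j l, b j * d l = b l * d j := by
  by_contra! hne
  obtain ⟨⟨i, k, hik⟩, j, l, hjl⟩ := hne
  have hminor := isDyad_iff_minors.1 h i j k l
  simp only [Matrix.add_apply, vecMulVec_apply] at hminor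
  have hprod : (a i * c k - a k * c i) * (b j * d l - b l * d j) = 0 := by
    linear_combination hminor
  exact (mul_ne_zero (sub_ne_zero.2 hik) (sub_ne_zero.2 hjl)) hprod

theorem vecMulVec_eq_zero_iff {a : m → F} {b : n → F} :
    vecMulVec a b = 0 ↔ a = 0 ∨ b = 0 := by
  simp only [← Matrix.ext_iff, vecMulVec_apply, Matrix.zero_apply, mul_eq_zero, funext_iff,
    Pi.zero_apply, forall_or_left, forall_or_right]

theorem vecMulVecBilin_injective {u : m → F} (hu : u ≠ 0) :
    Function.Injective (vecMulVecBilin (n := n) F F u) :=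
  (injective_iff_map_eq_zero _).2 fun _ h => (vecMulVec_eq_zero_iff.1 h).resolve_left hu

theorem vecMulVecBilin_flip_injective {v : n → F} (hv : v ≠ 0) :
    Function.Injective ((vecMulVecBilin (m := m) F F).flip v) :=
  (injective_iff_map_eq_zero _).2 fun _ h => (vecMulVec_eq_zero_iff.1 h).resolve_right hv

variable {V W Z : Type*} [AddCommGroup V] [Module F V] [AddCommGroup W] [Module F W]
  [AddCommGroup Z] [Module F Z]

theorem exists_eq_comp_of_range_le {f : V →ₗ[F] Z} {g : W →ₗ[F] Z} (hg : Function.Injective g)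
    (h : LinearMap.range f ≤ LinearMap.range g) : ∃ N : V →ₗ[F] W, f = g ∘ₗ N := by
  obtain ⟨g', hg'⟩ := g.exists_leftInverse_of_injective (LinearMap.ker_eq_bot.2 hg)
  refine ⟨g' ∘ₗ f, LinearMap.ext fun x => ?_⟩
  obtain ⟨y, hy⟩ := h ⟨x, rfl⟩
  have hy' : g' (g y) = y := LinearMap.congr_fun hg' y
  rw [LinearMap.comp_apply, LinearMap.comp_apply, ← hy, hy']

theorem range_le_or_range_le_of_isDyad {L : V →ₗ[F] Matrix m n F} (hL : ∀ x, IsDyad (L x)) {u v}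
    {x₀ : V} (hx₀ : L x₀ = vecMulVec u v) (hne : L x₀ ≠ 0) :
    LinearMap.range L ≤ LinearMap.range (vecMulVecBilin F F u) ∨
      LinearMap.range L ≤ LinearMap.range ((vecMulVecBilin F F).flip v) := by
  rw [hx₀, Ne, vecMulVec_eq_zero_iff, not_or] at hne
  rw [← AddSubgroupClass.subset_union]
  rintro _ ⟨x, rfl⟩
  obtain ⟨a, b, hab⟩ := hL x
  have hadd : IsDyad (vecMulVec a b + vecMulVec u v) := by
    rw [← hab, ← hx₀, ← map_add]
    exact hL _
  rw [hab]
  refine (minors_of_isDyad_add hadd).imp (fun h => ?_) fun h => ?_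
  · obtain ⟨s, rfl⟩ := Submodule.mem_span_singleton.1 (mem_span_singleton_of_minors hne.1 h)
    exact ⟨s • b, by simp⟩
  · obtain ⟨s, rfl⟩ := Submodule.mem_span_singleton.1 (mem_span_singleton_of_minors hne.2 h)
    exact ⟨s • a, by simp⟩

/-- The values `u (N x)ᵀ` of `L` share a nonzero left factor `u`. The right factor is asked to
depend injectively on `x`, so that `L` is injective. -/
def HasCommonLeftFactor (L : V →ₗ[F] Matrix m n F) : Prop :=
  ∃ u, u ≠ 0 ∧ ∃ N : V →ₗ[F] n → F, Function.Injective N ∧ ∀ x, L x = vecMulVec u (N x)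

/-- The values `(K x) vᵀ` of `L` share a nonzero right factor `v`, the left factor depending
injectively on `x`; this is the transpose of `HasCommonLeftFactor`. -/
def HasCommonRightFactor (L : V →ₗ[F] Matrix m n F) : Prop :=
  ∃ v, v ≠ 0 ∧ ∃ K : V →ₗ[F] m → F, Function.Injective K ∧ ∀ x, L x = vecMulVec (K x) v

theorem HasCommonRightFactor.transpose {L : V →ₗ[F] Matrix m n F} (hL : HasCommonRightFactor L) :
    HasCommonLeftFactor ((transposeLinearEquiv m n F F).toLinearMap ∘ₗ L) := by
  obtain ⟨v, hv, K, hK, h⟩ := hL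
  refine ⟨v, hv, K, hK, fun x => ?_⟩
  rw [← transpose_vecMulVec, ← h]
  rfl

theorem hasCommonLeftFactor_or_hasCommonRightFactor [Nontrivial V] {L : V →ₗ[F] Matrix m n F}
    (hinj : Function.Injective L) (hL : ∀ x, IsDyad (L x)) :
    HasCommonLeftFactor L ∨ HasCommonRightFactor L := by
  obtain ⟨x₀, hx₀⟩ := exists_ne (0 : V)
  have hne : L x₀ ≠ 0 := (map_ne_zero_iff L hinj).2 hx₀
  obtain ⟨u, v, huv⟩ := hL x₀
  have huv0 := not_or.1 (mt vecMulVec_eq_zero_iff.2 (huv ▸ hne))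
  refine (range_le_or_range_le_of_isDyad hL huv hne).imp (fun h => ?_) fun h => ?_
  · obtain ⟨N, rfl⟩ := exists_eq_comp_of_range_le (vecMulVecBilin_injective huv0.1) h
    exact ⟨u, huv0.1, N, .of_comp (f := vecMulVecBilin F F u) hinj, fun _ => rfl⟩
  · obtain ⟨N, rfl⟩ := exists_eq_comp_of_range_le (vecMulVecBilin_flip_injective huv0.2) h
    exact ⟨v, huv0.2, N, .of_comp (f := (vecMulVecBilin F F).flip v) hinj, fun _ => rfl⟩

theorem not_range_le_span_singleton {f : V →ₗ[F] W} (hf : Function.Injective f)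
    (hV : 1 < Module.finrank F V) (w : W) : ¬ LinearMap.range f ≤ F ∙ w := by
  intro h
  have hle := Submodule.finrank_mono h
  rw [LinearMap.finrank_range_of_inj hf] at hle
  exact hV.not_ge (hle.trans (by simpa using finrank_span_le_card (R := F) {w}))

theorem HasCommonLeftFactor.not_forall_isDyad_add (hV : 1 < Module.finrank F V)
    {L L' : V →ₗ[F] Matrix m n F} (hL : HasCommonLeftFactor L) (hL' : HasCommonRightFactor L') :
    ¬ ∀ x, IsDyad (L x + L' x) := by
  obtain ⟨u, hu, N, hN, hLN⟩ := hL
  obtain ⟨v, hv, K, hK, hLK⟩ := hL'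
  simp only [hLN, hLK]
  intro h
  have hcover : ((⊤ : Submodule F V) : Set V) ⊆ (F ∙ v).comap N ∪ (F ∙ u).comap K := by
    intro x _
    refine (minors_of_isDyad_add (h x)).symm.imp (mem_span_singleton_of_minors hv) fun hx =>
      mem_span_singleton_of_minors hu fun i j => ?_
    linear_combination -hx i j
  rcases AddSubgroupClass.subset_union.1 hcover with hle | hle
  · exact not_range_le_span_singleton hN hV v (LinearMap.range_le_iff_comap.2 (top_le_iff.1 hle))
  · exact not_range_le_span_singleton hK hV u (LinearMap.range_le_iff_comap.2 (top_le_iff.1 hle))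

theorem exists_eq_smul_of_forall_mem_span {f : V →ₗ[F] W} {g : V →ₗ[F] W}
    (hg : Function.Bijective g) (h : ∀ x, f x ∈ F ∙ g x) : ∃ c : F, f = c • g := by
  let e := LinearEquiv.ofBijective g hg
  obtain ⟨c, hc⟩ := LinearMap.exists_eq_smul_id_of_forall_notLinearIndependent
    (f := e.symm.toLinearMap ∘ₗ f) fun x hx => by
      obtain ⟨s, hs⟩ := Submodule.mem_span_singleton.1 (h x)
      have hx0 : x ≠ 0 := hx.ne_zero 0
      refine (LinearIndependent.pair_iff' hx0).1 hx s ?_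
      rw [LinearMap.comp_apply, ← hs, map_smul]
      congr 1
      exact (e.symm_apply_apply x).symm
  refine ⟨c, LinearMap.ext fun x => ?_⟩
  have := congrArg e (LinearMap.congr_fun hc x)
  simpa using! this

end Dyads

section DyadPreservers

variable {F : Type*} [Field F] {n : Type*} [DecidableEq n] {T : Matrix n n F →ₗ[F] Matrix n n F}

/-- The restriction of `T` to the matrices supported on row `i`, as a function of that row. -/
def onRow (T : Matrix n n F →ₗ[F] Matrix n n F) (i : n) : (n → F) →ₗ[F] Matrix n n F :=
  T ∘ₗ vecMulVecBilin F F (Pi.single i 1)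

theorem onRow_apply (i : n) (y : n → F) : onRow T i y = T (vecMulVec (Pi.single i 1) y) :=
  rfl

theorem onRow_injective (hinj : Function.Injective T) (i : n) : Function.Injective (onRow T i) :=
  hinj.comp (vecMulVecBilin_injective (Pi.single_ne_zero_iff.2 one_ne_zero))

theorem isDyad_onRow_add (hT : ∀ x y, IsDyad (T (vecMulVec x y))) (i j : n) (y : n → F) :
    IsDyad (onRow T i y + onRow T j y) := by
  rw [onRow_apply, onRow_apply, ← map_add, ← add_vecMulVec]
  exact hT _ y

theorem forall_hasCommonLeftFactor_or_forall_hasCommonRightFactor [Finite n] [Nontrivial n]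
    (hinj : Function.Injective T) (hT : ∀ x y, IsDyad (T (vecMulVec x y))) :
    (∀ i, HasCommonLeftFactor (onRow T i)) ∨ ∀ i, HasCommonRightFactor (onRow T i) := by
  have hcases (i : n) : HasCommonLeftFactor (onRow T i) ∨ HasCommonRightFactor (onRow T i) :=
    hasCommonLeftFactor_or_hasCommonRightFactor (onRow_injective hinj i) fun y => hT _ y
  have := Fintype.ofFinite n
  have hfinrank : 1 < Module.finrank F (n → F) := by
    rw [Module.finrank_fintype_fun_eq_card]
    exact Fintype.one_lt_card
  refine or_iff_not_imp_left.2 fun hleft j => (hcases j).resolve_left fun hj => ?_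
  obtain ⟨i, hi⟩ := not_forall.1 hleft
  exact hj.not_forall_isDyad_add hfinrank ((hcases i).resolve_left hi) (isDyad_onRow_add hT j i)

theorem not_mem_span_left_factor [Finite n] (hinj : Function.Injective T) {i j : n} (hij : i ≠ j)
    {u v : n → F} {K : (n → F) → n → F} {N : (n → F) →ₗ[F] n → F} (hN : Function.Injective N)
    (hi : ∀ y, onRow T i y = vecMulVec u (K y)) (hj : ∀ y, onRow T j y = vecMulVec v (N y)) :
    u ∉ F ∙ v := by
  intro huv
  obtain ⟨s, rfl⟩ := Submodule.mem_span_singleton.1 huv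
  obtain ⟨y, hy⟩ := LinearMap.injective_iff_surjective.1 hN (s • K 1)
  have heq : onRow T i 1 = onRow T j y := by rw [hi, hj, hy, smul_vecMulVec, vecMulVec_smul]
  have := congrFun (congrFun (hinj heq) i) i
  simp [vecMulVec_apply, hij] at this

theorem exists_right_factor_eq_smul [Finite n] (hinj : Function.Injective T)
    (hT : ∀ x y, IsDyad (T (vecMulVec x y))) {i j : n} (hij : i ≠ j) {u v : n → F} (hv : v ≠ 0)
    {K N : (n → F) →ₗ[F] n → F} (hN : Function.Injective N)
    (hi : ∀ y, onRow T i y = vecMulVec u (K y)) (hj : ∀ y, onRow T j y = vecMulVec v (N y)) :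
    ∃ c : F, K = c • N := by
  refine exists_eq_smul_of_forall_mem_span
    ⟨hN, LinearMap.injective_iff_surjective.1 hN⟩ fun y => ?_
  rcases eq_or_ne y 0 with rfl | hy
  · simp
  have hdyad := isDyad_onRow_add hT i j y
  rw [hi, hj] at hdyad
  refine mem_span_singleton_of_minors ((map_ne_zero_iff _ hN).2 hy) ?_
  exact (minors_of_isDyad_add hdyad).resolve_left fun hminors =>
    not_mem_span_left_factor hinj hij hN hi hj (mem_span_singleton_of_minors hv hminors)

theorem exists_eq_mul_mul_of_hasCommonLeftFactor [Fintype n] [Nonempty n]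
    (hinj : Function.Injective T) (hT : ∀ x y, IsDyad (T (vecMulVec x y)))
    (h : ∀ i, HasCommonLeftFactor (onRow T i)) :
    ∃ U N : Matrix n n F, ∀ X, T X = U * X * N := by
  choose u hu N hN huN using h
  obtain ⟨i₀⟩ := ‹Nonempty n›
  have hparallel (i : n) : ∃ c : F, N i = c • N i₀ := by
    rcases eq_or_ne i i₀ with rfl | hi
    · exact ⟨1, (one_smul F _).symm⟩
    · exact exists_right_factor_eq_smul hinj hT hi (hu i₀) (hN i₀) (huN i) (huN i₀)
  choose c hc using hparallel
  let U : Matrix n n F := (Matrix.of fun i => c i • u i)ᵀ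
  let M : Matrix n n F := (LinearMap.toMatrix' (N i₀))ᵀ
  refine ⟨U, M, LinearMap.congr_fun (g := LinearMap.mulRight F M ∘ₗ LinearMap.mulLeft F U)
    (Matrix.ext_linearMap F fun i j => LinearMap.ext_ring ?_)⟩
  calc T (Matrix.single i j 1) = vecMulVec (u i) (N i (Pi.single j 1)) := by
        rw [single_eq_single_vecMulVec_single, ← huN, onRow_apply]
    _ = vecMulVec (U.col i) (M.row j) := by
        rw [hc]
        ext k l
        simp only [U, M, LinearMap.smul_apply, vecMulVec_apply, Pi.smul_apply, smul_eq_mul,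
          col_transpose, of_row, row_transpose, col_apply, LinearMap.toMatrix'_apply]
        ring
    _ = U * Matrix.single i j 1 * M := by
        rw [single_eq_single_vecMulVec_single, mul_vecMulVec, vecMulVec_mul, mulVec_single_one,
          single_one_vecMul]

end DyadPreservers

theorem exists_eq_mul_mul_or_eq_mul_transpose_mul_s15 {F : Type*} [Field F] {n : Type*} [Fintype n]
    [Nontrivial n] {T : Matrix n n F →ₗ[F] Matrix n n F} (hinj : Function.Injective T)
    (hT : ∀ x y, IsDyad (T (vecMulVec x y))) :
    (∃ U N : Matrix n n F, ∀ X, T X = U * X * N) ∨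
      ∃ U N : Matrix n n F, ∀ X, T X = U * Xᵀ * N := by
  classical
  refine (forall_hasCommonLeftFactor_or_forall_hasCommonRightFactor hinj hT).imp
    (exists_eq_mul_mul_of_hasCommonLeftFactor hinj hT) fun h => ?_
  obtain ⟨U, N, hUN⟩ := exists_eq_mul_mul_of_hasCommonLeftFactor
    (T := (transposeLinearEquiv n n F F).toLinearMap ∘ₗ T)
    ((transposeLinearEquiv n n F F).injective.comp hinj) (fun x y => (hT x y).transpose)
    fun i => (h i).transpose
  refine ⟨Nᵀ, Uᵀ, fun X => ?_⟩
  rw [← transpose_transpose (T X), show (T X)ᵀ = U * X * N from hUN X, transpose_mul,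
    transpose_mul, Matrix.mul_assoc]

section Preservers

variable {F : Type*} [Field F] {w : F}

theorem det_sq_map_eq_one {T : Matrix (Fin 3) (Fin 3) F →ₗ[F] Matrix (Fin 3) (Fin 3) F}
    (hT : ∀ A ∈ ProdInv3 F 3, T A ∈ ProdInv3 F 3) {X : Matrix (Fin 3) (Fin 3) F}
    (hX : X.det ^ 2 = 1) : (T X).det ^ 2 = 1 := by
  by_cases hscalar : ∃ c : F, X = c • 1
  · obtain ⟨c, rfl⟩ := hscalar
    rw [det_smul, det_one, mul_one] at hX
    rw [map_smul, det_smul, mul_pow, hX, one_mul]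
    exact ProdInv3.det_sq (hT 1 ProdInv3.one_mem)
  · exact ProdInv3.det_sq (hT X (mem_prodInv3_of_not_scalar hX (not_exists.1 hscalar)))

theorem exists_eq_smul_one_of_mul_right_mem (hw : IsPrimitiveRoot w 3)
    {K : Matrix (Fin 3) (Fin 3) F} (hK : ∀ A ∈ ProdInv3 F 3, A * K ∈ ProdInv3 F 3) :
    ∃ c : F, c ^ 2 = 1 ∧ K = c • 1 := by
  have hK1 : K ∈ ProdInv3 F 3 := by simpa using hK 1 ProdInv3.one_mem
  have hKdet : K.det ^ 2 = 1 := ProdInv3.det_sq hK1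
  have hKu : IsUnit K.det := IsUnit.of_pow_eq_one hKdet two_ne_zero
  have h3 := three_ne_zero_of_isPrimitiveRoot hw
  obtain ⟨c, rfl⟩ : ∃ c : F, K = c • 1 := by
    by_contra! hns
    have hmem : w • K⁻¹ ∈ ProdInv3 F 3 := by
      refine mem_prodInv3_of_not_scalar ?_ fun c hc => ?_
      · rw [det_smul, det_nonsing_inv, Ring.inverse_eq_inv', Fintype.card_fin, hw.pow_eq_one,
          one_mul, inv_pow, hKdet, inv_one]
      · have hcK : c • K = w • 1 := by
          rw [← nonsing_inv_mul K hKu, ← Matrix.smul_mul, hc, Matrix.smul_mul, Matrix.one_mul]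
        have hc0 : c ≠ 0 := by
          rintro rfl
          exact hw.ne_zero three_ne_zero (by simpa using hcK.symm)
        exact hns (c⁻¹ * w) (by rw [mul_smul, ← hcK, inv_smul_smul₀ hc0])
    have hw1 : w • (1 : Matrix (Fin 3) (Fin 3) F) ∈ ProdInv3 F 3 := by
      simpa only [Matrix.smul_mul, nonsing_inv_mul K hKu] using hK _ hmem
    exact hw.pow_ne_one_of_pos_of_lt two_ne_zero (by norm_num)
      (sq_eq_one_of_smul_one_mem_prodInv3 h3 hw1)
  exact ⟨c, sq_eq_one_of_smul_one_mem_prodInv3 h3 hK1, rfl⟩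

theorem exists_eq_smul_conj_of_mem_prodInv3 (hw : IsPrimitiveRoot w 3)
    {U N : Matrix (Fin 3) (Fin 3) F} (h : ∀ A ∈ ProdInv3 F 3, U * A * N ∈ ProdInv3 F 3) :
    ∃ α : F, (α = 1 ∨ α = -1) ∧ IsUnit U ∧ ∀ X, U * X * N = α • (U * X * U⁻¹) := by
  have hdet : (U.det * N.det) ^ 2 = 1 := by
    simpa only [Matrix.mul_one, det_mul] using ProdInv3.det_sq (h 1 ProdInv3.one_mem)
  have hUd : IsUnit U.det := isUnit_of_mul_isUnit_left (.of_pow_eq_one hdet two_ne_zero)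
  have hU : IsUnit U := (isUnit_iff_isUnit_det U).2 hUd
  obtain ⟨c, hc, hcNU⟩ := exists_eq_smul_one_of_mul_right_mem hw (K := N * U) fun A hA => by
    have hconj := ProdInv3.conj (h A hA) (isUnit_nonsing_inv_iff.2 hU)
    rwa [nonsing_inv_nonsing_inv U hUd, Matrix.mul_assoc U, nonsing_inv_mul_cancel_left U _ hUd,
      Matrix.mul_assoc] at hconj
  have hN : N = c • U⁻¹ := by
    rw [← mul_nonsing_inv_cancel_right U N hUd, hcNU, Matrix.smul_mul, Matrix.one_mul]
  refine ⟨c, sq_eq_one_iff.1 hc, hU, fun X => ?_⟩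
  rw [hN, Matrix.mul_smul]

theorem exists_conj_of_preserves_prodInv3 (hproper : ProdInv3 F 3 ⊂ ProdInv4 F 3)
    {T : Matrix (Fin 3) (Fin 3) F →ₗ[F] Matrix (Fin 3) (Fin 3) F} (hT : Function.Bijective T)
    (h : ∀ A ∈ ProdInv3 F 3, T A ∈ ProdInv3 F 3) :
    ∃ (α : F) (P : Matrix (Fin 3) (Fin 3) F), (α = 1 ∨ α = -1) ∧ IsUnit P ∧
      ((∀ X, T X = α • (P * X * P⁻¹)) ∨ (∀ X, T X = α • (P * Xᵀ * P⁻¹))) := by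
  obtain ⟨w, hw⟩ := exists_isPrimitiveRoot_three hproper
  have hdyad (x y) : IsDyad (T (vecMulVec x y)) := isDyad_of_adjugate_eq_zero
    (adjugate_map_vecMulVec_eq_zero hw hT.surjective (fun X => det_sq_map_eq_one h) x y)
  rcases exists_eq_mul_mul_or_eq_mul_transpose_mul_s15 hT.injective hdyad with
    ⟨U, N, hUN⟩ | ⟨U, N, hUN⟩
  · obtain ⟨α, hα, hU, hX⟩ := exists_eq_smul_conj_of_mem_prodInv3 hw (U := U) (N := N)
      fun A hA => hUN A ▸ h A hA
    exact ⟨α, U, hα, hU, .inl fun X => (hUN X).trans (hX X)⟩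
  · obtain ⟨α, hα, hU, hX⟩ := exists_eq_smul_conj_of_mem_prodInv3 hw (U := U) (N := N)
      fun A hA => by simpa only [hUN, transpose_transpose] using h _ (ProdInv3.transpose hA)
    exact ⟨α, U, hα, hU, .inr fun X => (hUN X).trans (hX Xᵀ)⟩

end Preservers

theorem stmt15_general (F : Type*) [Field F]
    (hproper : ProdInv3 F 3 ⊂ ProdInv4 F 3)
    (T : Matrix (Fin 3) (Fin 3) F →ₗ[F] Matrix (Fin 3) (Fin 3) F)
    (hT : Function.Bijective T) :
    (∀ A ∈ ProdInv3 F 3, T A ∈ ProdInv3 F 3) ↔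
      ∃ (α : F) (P : Matrix (Fin 3) (Fin 3) F), (α = 1 ∨ α = -1) ∧ IsUnit P ∧
        ((∀ X, T X = α • (P * X * P⁻¹)) ∨ (∀ X, T X = α • (P * Xᵀ * P⁻¹))) := by
  constructor
  · exact exists_conj_of_preserves_prodInv3 hproper hT
  · rintro ⟨α, P, hα, hP, hX | hX⟩ A hA <;> rw [hX]
    · exact ProdInv3.smul (sq_eq_one_iff.2 hα) (ProdInv3.conj hA hP)
    · exact ProdInv3.smul (sq_eq_one_iff.2 hα) (ProdInv3.conj (ProdInv3.transpose hA) hP)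

theorem stmt15 (F : Type*) [Field F] (hchar : ringChar F ≠ 2)
    (hproper : ProdInv3 F 3 ⊂ ProdInv4 F 3)
    (T : Matrix (Fin 3) (Fin 3) F →ₗ[F] Matrix (Fin 3) (Fin 3) F)
    (hT : Function.Bijective T) :
    (∀ A ∈ ProdInv3 F 3, T A ∈ ProdInv3 F 3) ↔
      ∃ (α : F) (P : Matrix (Fin 3) (Fin 3) F), (α = 1 ∨ α = -1) ∧ IsUnit P ∧
        ((∀ X, T X = α • (P * X * P⁻¹)) ∨ (∀ X, T X = α • (P * Xᵀ * P⁻¹))) :=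
  stmt15_general F hproper T hT
end
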